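/- arXiv:2411.00679 — 5 statements merged into one kernel-verified Lean document; each statement's English description precedes it below -/
import Mathlib

section
/- Extension Lemma: Let G be a finite simple graph, L a list assignment for G, and let v be a vertex of G with |L(v)| ≥ d(v) + 2, where d(v) is the degree of v in G. Let α and β be L-colorings of G, let G' = G − v, and let α', β' be the restrictions of α and β to G'. Suppose σ' is a recoloring sequence in G' from α' to β' in which the total number of recoloring steps performed at vertices of N(v) is s. Then σ' extends to a recoloring sequence σ in G from α to β that recolors v at most ⌈s/(|L(v)| − d(v) − 1)⌉ + 1 times and recolors every vertex other than v exactly as many times as σ' does. -/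
def IsLColoring {V : Type} (G : SimpleGraph V) (L : V → Finset ℕ) (φ : V → ℕ) : Prop :=
  (∀ v, φ v ∈ L v) ∧ ∀ ⦃u w : V⦄, G.Adj u w → φ u ≠ φ w

def recolorCount {V : Type} {m : ℕ} (φ : Fin (m + 1) → V → ℕ) (v : V) : ℕ :=
  (Finset.univ.filter fun i : Fin m => φ i.castSucc v ≠ φ i.succ v).card

def IsRecolSeq {V : Type} (G : SimpleGraph V) (L : V → Finset ℕ) {m : ℕ}
    (φ : Fin (m + 1) → V → ℕ) (α β : V → ℕ) : Prop :=
  φ 0 = α ∧ φ (Fin.last m) = β ∧ (∀ i, IsLColoring G L (φ i)) ∧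
    ∀ i : Fin m, ∃! v : V, φ i.castSucc v ≠ φ i.succ v

/-- Validity of a list of recoloring moves `(vertex, new color)` from the coloring `α`. -/
def ValidMoves {W : Type} [DecidableEq W] (G : SimpleGraph W) (L : W → Finset ℕ) :
    (W → ℕ) → List (W × ℕ) → Prop
  | _, [] => True
  | α, p :: l => α p.1 ≠ p.2 ∧ p.2 ∈ L p.1 ∧ (∀ w, G.Adj p.1 w → α w ≠ p.2) ∧
      ValidMoves G L (Function.update α p.1 p.2) l

/-- The coloring reached from `α` after a list of moves. -/
def finalColoring {W : Type} [DecidableEq W] : (W → ℕ) → List (W × ℕ) → (W → ℕ)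
  | α, [] => α
  | α, p :: l => finalColoring (Function.update α p.1 p.2) l

theorem recolorCount_succ {W : Type} {m : ℕ} (φ : Fin (m + 1 + 1) → W → ℕ) (w : W) :
    recolorCount φ w = recolorCount (fun i : Fin (m + 1) => φ i.succ) w +
      if φ 0 w ≠ φ 1 w then 1 else 0 := by
  unfold recolorCount
  rw [Finset.card_filter, Finset.card_filter, Fin.sum_univ_succ, add_comm]
  rfl

theorem isLColoring_update {W : Type} [DecidableEq W] {G : SimpleGraph W} {L : W → Finset ℕ}
    {α : W → ℕ} (hα : IsLColoring G L α) {u : W} {c : ℕ} (hc : c ∈ L u)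
    (hn : ∀ w, G.Adj u w → α w ≠ c) : IsLColoring G L (Function.update α u c) := by
  refine ⟨fun x => ?_, fun x y hxy => ?_⟩
  · by_cases h : x = u
    · subst h; simpa using hc
    · simpa [h] using hα.1 x
  · by_cases h : x = u
    · subst h
      have : y ≠ x := hxy.ne'
      simpa [this] using (hn y hxy).symm
    · by_cases h2 : y = u
      · subst h2
        simpa [h] using hn x hxy.symm
      · simpa [h, h2] using hα.2 hxy

theorem exists_moves {W : Type} [DecidableEq W] (G : SimpleGraph W) (L : W → Finset ℕ)
    (β : W → ℕ) : ∀ (m : ℕ) (α : W → ℕ) (φ : Fin (m + 1) → W → ℕ), IsRecolSeq G L φ α β →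
      ∃ l : List (W × ℕ), ValidMoves G L α l ∧ finalColoring α l = β ∧
        ∀ w, (l.map Prod.fst).count w = recolorCount φ w := by
  intro m
  induction m with
  | zero =>
    rintro α φ ⟨h0, h1, -, -⟩
    refine ⟨[], trivial, ?_, ?_⟩
    · simp only [finalColoring]; rw [← h0, ← h1]; rfl
    · intro w; simp [recolorCount]
  | succ m ih =>
    rintro α φ ⟨h0, h1, hc, hs⟩
    obtain ⟨u, hu, huniq⟩ := hs 0
    have hu' : φ 0 u ≠ φ 1 u := hu
    have huniq' : ∀ y, φ 0 y ≠ φ 1 y → y = u := huniq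
    have hup : φ 1 = Function.update α u (φ 1 u) := by
      funext y
      by_cases hy : y = u
      · subst hy; simp
      · rw [Function.update_of_ne hy, ← h0]
        by_contra hne
        exact hy (huniq' y (Ne.symm hne))
    obtain ⟨l, hl1, hl2, hl3⟩ := ih (φ 1) (fun i => φ i.succ)
      ⟨rfl, h1, fun i => hc _, fun i => hs i.succ⟩
    refine ⟨(u, φ 1 u) :: l, ⟨?_, (hc 1).1 u, ?_, ?_⟩, ?_, ?_⟩
    · rw [← h0]; exact hu'
    · intro w hw
      have hwu : w ≠ u := hw.ne'
      have := congrFun hup w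
      rw [Function.update_of_ne hwu] at this
      rw [← this]
      exact ((hc 1).2 hw).symm
    · show ValidMoves G L (Function.update α u (φ 1 u)) l
      rw [← hup]; exact hl1
    · show finalColoring (Function.update α u (φ 1 u)) l = β
      rw [← hup]; exact hl2
    · intro w
      rw [recolorCount_succ, List.map_cons, List.count_cons, hl3]
      congr 1
      by_cases hw : w = u
      · subst hw; simp [hu']
      · have h2 : φ 0 w = φ 1 w := by
          by_contra hne; exact hw (huniq' w hne)
        simp [h2, Ne.symm hw]

theorem exists_recolSeq {W : Type} [DecidableEq W] (G : SimpleGraph W) (L : W → Finset ℕ)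
    (β : W → ℕ) : ∀ (l : List (W × ℕ)) (α : W → ℕ), IsLColoring G L α → ValidMoves G L α l →
      finalColoring α l = β → ∃ (M : ℕ) (φ : Fin (M + 1) → W → ℕ), IsRecolSeq G L φ α β ∧
        ∀ w, recolorCount φ w = (l.map Prod.fst).count w := by
  intro l
  induction l with
  | nil =>
    intro α hα _ hf
    refine ⟨0, fun _ => α, ⟨rfl, hf, fun _ => hα, fun i => i.elim0⟩, fun w => ?_⟩
    simp [recolorCount]
  | cons p l ih =>
    rintro α hα ⟨h1, h2, h3, h4⟩ hf
    obtain ⟨M, φ, ⟨g0, g1, g2, g3⟩, g4⟩ := ih _ (isLColoring_update hα h2 h3) h4 hf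
    have key : ∀ w, α w ≠ φ 0 w ↔ w = p.1 := by
      intro w
      rw [g0]
      by_cases hw : w = p.1
      · subst hw; simpa using h1
      · simp [hw]
    refine ⟨M + 1, Fin.cons α φ, ⟨rfl, ?_, ?_, ?_⟩, ?_⟩
    · rw [← g1, ← Fin.succ_last, Fin.cons_succ]
    · intro i
      refine Fin.cases ?_ (fun i => ?_) i
      · exact hα
      · exact g2 i
    · intro i
      refine Fin.cases ?_ (fun i => ?_) i
      · exact ⟨p.1, (key p.1).2 rfl, fun y hy => (key y).1 hy⟩
      · exact g3 i
    · intro w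
      rw [recolorCount_succ, List.map_cons, List.count_cons, ← g4]
      have e : ((Fin.cons α φ : Fin (M + 1 + 1) → W → ℕ) 0 w ≠
          (Fin.cons α φ : Fin (M + 1 + 1) → W → ℕ) 1 w) ↔ w = p.1 := key w
      simp only [e, Fin.cons_succ, beq_iff_eq, eq_comm (a := w)]

theorem length_filter_eq_sum {W : Type} [Fintype W] [DecidableEq W] (P : W → Prop)
    [DecidablePred P] (l : List (W × ℕ)) :
    (l.filter (fun p => decide (P p.1))).length =
      ∑ u ∈ Finset.univ.filter P, (l.map Prod.fst).count u := by
  induction l with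
  | nil => simp
  | cons p l ih =>
    simp only [List.map_cons, List.count_cons, Finset.sum_add_distrib, ← ih, beq_iff_eq,
      Finset.sum_ite_eq, Finset.mem_filter, Finset.mem_univ, true_and, List.filter_cons]
    by_cases h : P p.1 <;> simp [h]

theorem restrict_update {V : Type} [DecidableEq V] (v : V) (α : V → ℕ)
    (u : ↥({u : V | u ≠ v})) (c : ℕ) :
    (fun x : ↥({u : V | u ≠ v}) => Function.update α u.1 c x.1) =
      Function.update (fun x : ↥({u : V | u ≠ v}) => α x.1) u c := by
  funext x
  by_cases h : x = u
  · subst h; simp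
  · have : x.1 ≠ u.1 := fun e => h (Subtype.ext e)
    simp [h, this]

theorem restrict_update_self {V : Type} [DecidableEq V] (v : V) (α : V → ℕ) (c : ℕ) :
    (fun x : ↥({u : V | u ≠ v}) => Function.update α v c x.1) = (fun x => α x.1) := by
  funext x
  exact Function.update_of_ne x.2 _ _

theorem extend_moves {V : Type} [Fintype V] [DecidableEq V]
    (G : SimpleGraph V) [DecidableRel G.Adj] (L : V → Finset ℕ) (v : V) (k : ℕ) (hk : 0 < k)
    (hLv : G.degree v + k + 1 ≤ (L v).card)
    (β : V → ℕ) (hβ : IsLColoring G L β) :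
    ∀ (l : List (↥({u : V | u ≠ v}) × ℕ)) (α : V → ℕ) (j : ℕ), IsLColoring G L α →
      ValidMoves (G.induce {u : V | u ≠ v}) (fun u => L u.1) (fun u => α u.1) l →
      finalColoring (fun u : ↥({u : V | u ≠ v}) => α u.1) l = (fun u => β u.1) →
      α v ∉ ((l.filter (fun p => decide (G.Adj v p.1.1))).map Prod.snd).take j →
      ∃ l' : List (V × ℕ), ValidMoves G L α l' ∧ finalColoring α l' = β ∧
        (l'.map Prod.fst).count v ≤
          ((l.filter (fun p => decide (G.Adj v p.1.1))).length - j + (k - 1)) / k + 1 ∧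
        ∀ u : ↥({u : V | u ≠ v}), (l'.map Prod.fst).count u.1 = (l.map Prod.fst).count u := by
  intro l
  induction l with
  | nil =>
    intro α j hα _ hf _
    have hf' : ∀ u, u ≠ v → α u = β u := fun u hu => congrFun hf ⟨u, hu⟩
    by_cases h : α v = β v
    · refine ⟨[], trivial, ?_, by simp, by simp⟩
      funext u
      by_cases hu : u = v
      · subst hu; exact h
      · exact hf' u hu
    · refine ⟨[(v, β v)], ⟨h, hβ.1 v, ?_, trivial⟩, ?_, by simp, ?_⟩
      · intro w hw
        rw [hf' w hw.ne']
        exact (hβ.2 hw).symm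
      · funext u
        show Function.update α v (β v) u = β u
        by_cases hu : u = v
        · subst hu; simp
        · simpa [hu] using hf' u hu
      · intro u
        have : v ≠ u.1 := Ne.symm u.2
        simp [List.count_cons, this]
  | cons p l ih =>
    obtain ⟨u, c⟩ := p
    rintro α j hα ⟨h1, h2, h3, h4⟩ hf hj
    dsimp only at h1 h2 h3 h4
    have huv : u.1 ≠ v := u.2
    -- the move `(u, c)` is fine as soon as the color of `v` differs from `c`
    have mv : ∀ α' : V → ℕ, IsLColoring G L α' → (∀ x, x ≠ v → α' x = α x) →
        (G.Adj v u.1 → α' v ≠ c) →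
        ∀ j', α' v ∉ ((l.filter (fun p => decide (G.Adj v p.1.1))).map Prod.snd).take j' →
        ∃ l' : List (V × ℕ), ValidMoves G L α' ((u.1, c) :: l') ∧
          finalColoring α' ((u.1, c) :: l') = β ∧
          (l'.map Prod.fst).count v ≤
            ((l.filter (fun p => decide (G.Adj v p.1.1))).length - j' + (k - 1)) / k + 1 ∧
          ∀ w : ↥({u : V | u ≠ v}), (l'.map Prod.fst).count w.1 = (l.map Prod.fst).count w := by
      intro α' hα' hag hav j' hj'
      have hn : ∀ w, G.Adj u.1 w → α' w ≠ c := by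
        intro w hw
        by_cases hwv : w = v
        · subst hwv; exact hav hw.symm
        · rw [hag w hwv]; exact h3 ⟨w, hwv⟩ hw
      have hres : (fun x : ↥({u : V | u ≠ v}) => α' x.1) = fun x => α x.1 := by
        funext x; exact hag x.1 x.2
      have hv : Function.update α' u.1 c v = α' v := Function.update_of_ne huv.symm _ _
      obtain ⟨l', a1, a2, a3, a4⟩ := ih (Function.update α' u.1 c) j'
        (isLColoring_update hα' h2 hn)
        (by rw [restrict_update, hres]; exact h4)
        (by rw [restrict_update, hres]; exact hf)
        (by rw [hv]; exact hj')
      exact ⟨l', ⟨by show α' u.1 ≠ c; rw [hag _ huv]; exact h1, h2, hn, a1⟩, a2, a3, a4⟩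
    have cnt_u : ∀ l' : List (V × ℕ),
        (∀ w : ↥({u : V | u ≠ v}), (l'.map Prod.fst).count w.1 = (l.map Prod.fst).count w) →
        ∀ w : ↥({u : V | u ≠ v}), (((u.1, c) :: l').map Prod.fst).count w.1 =
          (((u, c) :: l).map Prod.fst).count w := by
      intro l' hl' w
      simp only [List.map_cons, List.count_cons, hl', beq_iff_eq, Subtype.ext_iff]
    have cnt_v : ∀ l' : List (V × ℕ),
        (((u.1, c) :: l').map Prod.fst).count v = (l'.map Prod.fst).count v := by
      intro l'
      simp [List.count_cons, huv]
    by_cases hadj : G.Adj v u.1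
    · have hfil : ((u, c) :: l).filter (fun p => decide (G.Adj v p.1.1)) =
          (u, c) :: l.filter (fun p => decide (G.Adj v p.1.1)) := by
        rw [List.filter_cons]; simp [hadj]
      rw [hfil] at hj ⊢
      set T := l.filter (fun p => decide (G.Adj v p.1.1)) with hT
      by_cases hc : α v = c
      · have hj0 : j = 0 := by
          rcases j with _ | j
          · rfl
          · exfalso; apply hj; simp [hc]
        subst hj0
        -- choose a new color
        obtain ⟨c', hc'L, hc'⟩ : ∃ c' ∈ L v, c' ∉ ((G.neighborFinset v).image α) ∪
            ((c :: T.map Prod.snd).take k).toFinset := by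
          apply Finset.exists_mem_notMem_of_card_lt_card
          have e1 : ((G.neighborFinset v).image α).card ≤ G.degree v := Finset.card_image_le
          have e2 : (((c :: T.map Prod.snd).take k).toFinset).card ≤ k :=
            (List.toFinset_card_le _).trans (List.length_take_le _ _)
          have e3 := Finset.card_union_le ((G.neighborFinset v).image α)
            (((c :: T.map Prod.snd).take k).toFinset)
          omega
        obtain ⟨k', rfl⟩ : ∃ k', k = k' + 1 := ⟨k - 1, by omega⟩
        simp only [Finset.mem_union, Finset.mem_image, SimpleGraph.mem_neighborFinset,
          List.mem_toFinset, List.take_succ_cons, List.mem_cons, not_or, not_exists,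
          not_and] at hc'
        obtain ⟨hn, hcc, hT'⟩ := hc'
        have hn' : ∀ w, G.Adj v w → α w ≠ c' := fun w hw => hn w hw
        obtain ⟨l', a1, a2, a3, a4⟩ := mv (Function.update α v c')
          (isLColoring_update hα hc'L hn') (fun x hx => Function.update_of_ne hx _ _)
          (fun _ => by simpa using hcc) k' (by simpa using hT')
        refine ⟨(v, c') :: (u.1, c) :: l', ⟨?_, hc'L, hn', a1⟩, a2, ?_, ?_⟩
        · show α v ≠ c'
          rw [hc]; exact Ne.symm hcc
        · have : (((v, c') :: (u.1, c) :: l').map Prod.fst).count v =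
              (l'.map Prod.fst).count v + 1 := by
            rw [List.map_cons, List.count_cons, cnt_v]; simp
          rw [this]
          refine Nat.succ_le_succ (a3.trans ?_)
          simp only [List.length_cons, Nat.add_sub_cancel, Nat.sub_zero]
          rw [show T.length + 1 + k' = T.length + (k' + 1) by ring,
            Nat.add_div_right _ (Nat.succ_pos _)]
          refine Nat.succ_le_succ ?_
          rcases le_total k' T.length with h | h
          · rw [Nat.sub_add_cancel h]
          · rw [Nat.sub_eq_zero_of_le h, Nat.zero_add, Nat.div_eq_of_lt (Nat.lt_succ_self _)]
            exact Nat.zero_le _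
        · intro w
          have : v ≠ w.1 := Ne.symm w.2
          rw [List.map_cons, List.count_cons, cnt_u l' a4]; simp [this]
      · obtain ⟨l', a1, a2, a3, a4⟩ := mv α hα (fun _ _ => rfl) (fun _ => hc) (j - 1) (by
          rcases j with _ | j
          · simp
          · simp only [List.map_cons, List.take_succ_cons, List.mem_cons, not_or] at hj
            exact hj.2)
        refine ⟨_, a1, a2, ?_, cnt_u l' a4⟩
        rw [cnt_v]
        refine a3.trans (Nat.succ_le_succ (Nat.div_le_div_right ?_))
        simp only [List.length_cons]
        omega
    · have hfil : ((u, c) :: l).filter (fun p => decide (G.Adj v p.1.1)) =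
          l.filter (fun p => decide (G.Adj v p.1.1)) := by
        rw [List.filter_cons]; simp [hadj]
      rw [hfil] at hj ⊢
      obtain ⟨l', a1, a2, a3, a4⟩ := mv α hα (fun _ _ => rfl) (fun h => absurd h hadj) j hj
      refine ⟨_, a1, a2, ?_, cnt_u l' a4⟩
      rw [cnt_v]
      exact a3


/-- Extension Lemma: if `|L(v)| ≥ d(v) + 2` and `σ'` is a recoloring
sequence in `G − v` from `α'` to `β'` performing `s` recoloring steps on `N(v)`,
then it extends to a recoloring sequence in `G` from `α` to `β` recoloring `v` at
most `⌈s / (|L(v)| − d(v) − 1)⌉ + 1` times and every other vertex exactly as many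
times as `σ'` does. -/
theorem stmt_0 {V : Type} [Fintype V] [DecidableEq V]
    (G : SimpleGraph V) [DecidableRel G.Adj]
    (L : V → Finset ℕ) (v : V)
    (hLv : G.degree v + 2 ≤ (L v).card)
    (α β : V → ℕ) (hα : IsLColoring G L α) (hβ : IsLColoring G L β)
    (m : ℕ) (φ' : Fin (m + 1) → ↥({u : V | u ≠ v}) → ℕ)
    (hφ' : IsRecolSeq (G.induce {u : V | u ≠ v}) (fun u => L u.1) φ'
      (fun u => α u.1) (fun u => β u.1))
    (s : ℕ)
    (hs : s = ∑ u ∈ Finset.univ.filter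
      (fun u : ↥({u : V | u ≠ v}) => G.Adj v u.1), recolorCount φ' u) :
    ∃ (M : ℕ) (φ : Fin (M + 1) → V → ℕ),
      IsRecolSeq G L φ α β ∧
      (recolorCount φ v : ℤ) ≤
        ⌈(s : ℚ) / (((L v).card : ℚ) - (G.degree v : ℚ) - 1)⌉ + 1 ∧
      ∀ u : ↥({u : V | u ≠ v}), recolorCount φ u.1 = recolorCount φ' u := by
  obtain ⟨l, hl1, hl2, hl3⟩ := exists_moves _ _ _ m _ φ' hφ'
  obtain ⟨k, hk⟩ : ∃ k, (L v).card = G.degree v + k + 1 :=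
    ⟨(L v).card - G.degree v - 1, by omega⟩
  have hk0 : 0 < k := by omega
  obtain ⟨l', a1, a2, a3, a4⟩ := extend_moves G L v k hk0 hk.ge β hβ l α 0 hα hl1 hl2 (by simp)
  obtain ⟨M, φ, b1, b2⟩ := exists_recolSeq G L β l' α hα a1 a2
  refine ⟨M, φ, b1, ?_, fun u => by
    rw [b2, a4, ← hl3 u]
    congr 1
    exact lawful_beq_subsingleton _ _⟩
  have hlen : (l.filter (fun p => decide (G.Adj v p.1.1))).length = s := by
    rw [hs, length_filter_eq_sum (fun u : ↥({u : V | u ≠ v}) => G.Adj v u.1) l]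
    exact Finset.sum_congr rfl fun u _ => hl3 u
  rw [hlen, Nat.sub_zero, ← b2] at a3
  have hden : ((L v).card : ℚ) - (G.degree v : ℚ) - 1 = k := by
    rw [hk]; push_cast; ring
  rw [hden]
  set q := (s + (k - 1)) / k with hq
  have hqk : q * k ≤ s + (k - 1) := Nat.div_mul_le_self _ _
  have hqk' : q * k < s + k := by omega
  have hk0' : (0 : ℚ) < k := by exact_mod_cast hk0
  have hlt : ((q : ℤ) - 1) < ⌈(s : ℚ) / (k : ℚ)⌉ := by
    rw [Int.lt_ceil, lt_div_iff₀ hk0']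
    have : (q : ℚ) * k < s + k := by exact_mod_cast hqk'
    push_cast
    linarith
  have : (recolorCount φ v : ℤ) ≤ q + 1 := by exact_mod_cast a3
  omega
end

section
/- Let d be a positive integer. If G is a finite d-degenerate graph and L is a list assignment with |L(v)| ≥ 2d + 2 for all vertices v of G, then for every pair of L-colorings α and β of G there exists a recoloring sequence from α to β that recolors each vertex at most d + 1 times; in particular, the distance between α and β in the reconfiguration graph of L-colorings is at most (d+1)|V(G)|. -/
/-- `φ` is a proper list coloring on the vertex set `s`. -/
def OkOn {V : Type} (G : SimpleGraph V) (L : V → Finset ℕ) (s : Finset V) (φ : V → ℕ) : Prop :=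
  (∀ u ∈ s, φ u ∈ L u) ∧ ∀ u ∈ s, ∀ w ∈ s, G.Adj u w → φ u ≠ φ w

/-- a list of moves is valid on `s` from `φ`. -/
def ValidOn {V : Type} [DecidableEq V] (G : SimpleGraph V) (L : V → Finset ℕ) (s : Finset V) :
    (V → ℕ) → List (V × ℕ) → Prop
  | _, [] => True
  | φ, m :: ms => m.1 ∈ s ∧ OkOn G L s (Function.update φ m.1 m.2) ∧
      ValidOn G L s (Function.update φ m.1 m.2) ms

/-- run the moves -/
def runMoves {V : Type} [DecidableEq V] : (V → ℕ) → List (V × ℕ) → (V → ℕ)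
  | φ, [] => φ
  | φ, m :: ms => runMoves (Function.update φ m.1 m.2) ms

/-- number of moves at `u` -/
def cnt {V : Type} [DecidableEq V] (u : V) : List (V × ℕ) → ℕ
  | [] => 0
  | m :: ms => (if m.1 = u then 1 else 0) + cnt u ms

/-- colors of the moves at neighbors of `v` -/
def ncol {V : Type} (G : SimpleGraph V) [DecidableRel G.Adj] (v : V) : List (V × ℕ) → List ℕ
  | [] => []
  | m :: ms => if G.Adj v m.1 then m.2 :: ncol G v ms else ncol G v ms

section
variable {V : Type} [DecidableEq V] (G : SimpleGraph V) (L : V → Finset ℕ)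

lemma valid_append (s : Finset V) (v : V) (c : ℕ) (hv : v ∈ s) (ms : List (V × ℕ)) :
    ∀ φ, ValidOn G L s φ ms → OkOn G L s (Function.update (runMoves φ ms) v c) →
      ValidOn G L s φ (ms ++ [(v, c)]) ∧
      runMoves φ (ms ++ [(v, c)]) = Function.update (runMoves φ ms) v c ∧
      ∀ u, cnt u (ms ++ [(v, c)]) = cnt u ms + if v = u then 1 else 0 := by
  induction ms with
  | nil => intro φ _ h; simp_all [ValidOn, runMoves, cnt]
  | cons m ms ih =>
    intro φ h h2
    obtain ⟨a, b, e⟩ := ih _ h.2.2 h2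
    refine ⟨⟨h.1, h.2.1, a⟩, b, fun u => ?_⟩
    simp only [List.cons_append, cnt, e]
    omega

lemma ncol_length [DecidableRel G.Adj] (s : Finset V) (v : V) (ms : List (V × ℕ)) :
    ∀ φ, ValidOn G L s φ ms →
      (ncol G v ms).length = ∑ u ∈ s.filter (G.Adj v), cnt u ms := by
  induction ms with
  | nil => intro φ _; simp [ncol, cnt]
  | cons m ms ih =>
    intro φ h
    have := ih _ h.2.2
    simp only [ncol, cnt, Finset.sum_add_distrib, Finset.sum_ite_eq, Finset.mem_filter, h.1,
      true_and]
    split_ifs <;> simp [this, add_comm]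

lemma okOn_insert {s : Finset V} {v : V} (φ : V → ℕ) (h : OkOn G L s φ)
    (hv : φ v ∈ L v) (hn : ∀ u ∈ s, G.Adj v u → φ v ≠ φ u) : OkOn G L (insert v s) φ := by
  refine ⟨?_, ?_⟩
  · intro u hu
    rcases Finset.mem_insert.1 hu with rfl | hu
    · exact hv
    · exact h.1 u hu
  · intro u hu w hw ha
    rcases Finset.mem_insert.1 hu with hu1 | hu1 <;> rcases Finset.mem_insert.1 hw with hw1 | hw1
    · subst hu1; subst hw1; exact (G.loopless.irrefl _ ha).elim
    · subst hu1; exact hn w hw1 ha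
    · subst hw1; exact (hn u hu1 ha.symm).symm
    · exact h.2 u hu1 w hw1 ha

lemma okOn_congr {s : Finset V} (φ ψ : V → ℕ) (h : OkOn G L s φ)
    (he : ∀ u ∈ s, ψ u = φ u) : OkOn G L s ψ := by
  refine ⟨fun u hu => he u hu ▸ h.1 u hu, fun u hu w hw ha => ?_⟩
  rw [he u hu, he w hw]; exact h.2 u hu w hw ha

lemma okOn_mono {s t : Finset V} (hst : s ⊆ t) (φ : V → ℕ) (h : OkOn G L t φ) : OkOn G L s φ :=
  ⟨fun u hu => h.1 u (hst hu), fun u hu w hw => h.2 u (hst hu) w (hst hw)⟩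

lemma okOn_run (s : Finset V) (ms : List (V × ℕ)) :
    ∀ φ, OkOn G L s φ → ValidOn G L s φ ms → OkOn G L s (runMoves φ ms) := by
  induction ms with
  | nil => intro φ h _; exact h
  | cons m ms ih => intro φ h h2; exact ih _ h2.2.1 h2.2.2

lemma lift_moves [DecidableRel G.Adj] (d : ℕ) (s : Finset V) (v : V) (hv : v ∉ s)
    (hN : (s.filter (G.Adj v)).card ≤ d) (hL : 2 * d + 2 ≤ (L v).card) (ms : List (V × ℕ)) :
    ∀ (φ ψ : V → ℕ) (j : ℕ), (∀ u ∈ s, ψ u = φ u) → OkOn G L (insert v s) ψ →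
      ValidOn G L s φ ms → ψ v ∉ (ncol G v ms).take j →
      ∃ ms', ValidOn G L (insert v s) ψ ms' ∧ (∀ u ∈ s, runMoves ψ ms' u = runMoves φ ms u) ∧
        (∀ u ∈ s, cnt u ms' = cnt u ms) ∧
        cnt v ms' * (d + 1) ≤ ((ncol G v ms).length - j) + d := by
  induction ms with
  | nil =>
    intro φ ψ j he _ _ _
    exact ⟨[], trivial, he, fun _ _ => rfl, by simp [cnt]⟩
  | cons m ms ih =>
    intro φ ψ j he hok hval hj
    obtain ⟨x, c⟩ := m
    obtain ⟨hx, hok1, hval1⟩ := hval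
    simp only at hx hok1 hval1
    have hxv : x ≠ v := fun h => hv (h ▸ hx)
    -- generic step: the move is compatible with the color of `v`
    have step : ∀ (ψ : V → ℕ) (j : ℕ), (∀ u ∈ s, ψ u = φ u) → OkOn G L (insert v s) ψ →
        (G.Adj v x → ψ v ≠ c) → ψ v ∉ (ncol G v ms).take j →
        ∃ ms', ValidOn G L (insert v s) ψ ms' ∧
          (∀ u ∈ s, runMoves ψ ms' u = runMoves φ ((x, c) :: ms) u) ∧
          (∀ u ∈ s, cnt u ms' = cnt u ((x, c) :: ms)) ∧
          cnt v ms' * (d + 1) ≤ ((ncol G v ms).length - j) + d := by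
      intro ψ j he hok hc hj
      have he' : ∀ u ∈ s, Function.update ψ x c u = Function.update φ x c u := by
        intro u hu
        by_cases h : u = x
        · subst h; simp
        · simp [h, he u hu]
      have hψv : Function.update ψ x c v = ψ v := Function.update_of_ne hxv.symm _ _
      have hok' : OkOn G L (insert v s) (Function.update ψ x c) := by
        apply okOn_insert
        · exact okOn_congr G L _ _ hok1 he'
        · rw [hψv]; exact hok.1 v (Finset.mem_insert_self _ _)
        · intro u hu ha
          rw [hψv]
          by_cases h : u = x
          · subst h; simpa using hc ha
          · rw [Function.update_of_ne h]
            exact hok.2 v (Finset.mem_insert_self _ _) u (Finset.mem_insert_of_mem hu) ha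
      obtain ⟨ms', h1, h2, h3, h4⟩ := ih _ _ j he' hok' hval1 (by rwa [hψv])
      refine ⟨(x, c) :: ms', ⟨Finset.mem_insert_of_mem hx, hok', h1⟩, h2, ?_, ?_⟩
      · intro u hu; simp [cnt, h3 u hu]
      · simpa [cnt, hxv] using h4
    by_cases ha : G.Adj v x
    · have hnc : ncol G v ((x, c) :: ms) = c :: ncol G v ms := by simp [ncol, ha]
      rw [hnc] at hj ⊢
      by_cases hc : ψ v = c
      · have hj0 : j = 0 := by
          cases j with
          | zero => rfl
          | succ j => simp [hc] at hj
        subst hj0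
        -- choose a new color
        obtain ⟨c', hc'L, hc'⟩ : ∃ c' ∈ L v, c' ∉ (s.filter (G.Adj v)).image ψ ∪
            (c :: (ncol G v ms).take d).toFinset := by
          apply Finset.exists_mem_notMem_of_card_lt_card
          have h1 := Finset.card_union_le ((s.filter (G.Adj v)).image ψ)
            (c :: (ncol G v ms).take d).toFinset
          have h2 : ((s.filter (G.Adj v)).image ψ).card ≤ _ := Finset.card_image_le
          have h3 := List.toFinset_card_le (c :: (ncol G v ms).take d)
          have h4 : (c :: (ncol G v ms).take d).length ≤ d + 1 := by simp
          omega
        simp only [Finset.mem_union, Finset.mem_image, Finset.mem_filter, List.mem_toFinset,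
          List.mem_cons, not_or, not_exists, not_and] at hc'
        obtain ⟨hc1, hc2, hc3⟩ := hc'
        have hu : ∀ u ∈ s, Function.update ψ v c' u = ψ u := fun u hus =>
          Function.update_of_ne (fun h : u = v => hv (h ▸ hus)) _ _
        have hok' : OkOn G L (insert v s) (Function.update ψ v c') := by
          apply okOn_insert
          · exact okOn_congr G L _ _ (okOn_mono G L (Finset.subset_insert _ _) _ hok) hu
          · simpa using hc'L
          · intro u hus hau
            rw [hu u hus, Function.update_self]
            exact fun h => hc1 u ⟨hus, hau⟩ h.symm
        obtain ⟨ms', h1, h2, h3, h4⟩ := step (Function.update ψ v c') d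
          (fun u hus => (hu u hus).trans (he u hus)) hok' (fun _ => by simpa using hc2)
          (by simpa using hc3)
        refine ⟨(v, c') :: ms', ⟨Finset.mem_insert_self _ _, hok', h1⟩, h2, ?_, ?_⟩
        · intro u hus
          have : v ≠ u := fun h => hv (h ▸ hus)
          rw [← h3 u hus]; simp [cnt, this]
        · simp only [cnt, if_true, List.length_cons]
          by_cases hk : d ≤ (ncol G v ms).length
          · rw [add_mul]; omega
          · have : cnt v ms' = 0 := by
              by_contra h0
              have := Nat.mul_le_mul_right (d + 1) (Nat.one_le_iff_ne_zero.2 h0)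
              omega
            rw [this]; omega
      · obtain ⟨ms', h1, h2, h3, h4⟩ := step ψ (j - 1) he hok (fun _ => hc) (by
          cases j with
          | zero => simp
          | succ j => simp at hj; simpa using hj.2)
        refine ⟨ms', h1, h2, h3, h4.trans ?_⟩
        simp only [List.length_cons]; omega
    · have hnc : ncol G v ((x, c) :: ms) = ncol G v ms := by simp [ncol, ha]
      rw [hnc] at hj ⊢
      exact step ψ j he hok (fun h => absurd h ha) hj

lemma exists_moves_s1 [DecidableRel G.Adj] (d : ℕ)
    (hdegen : ∀ s : Finset V, s.Nonempty → ∃ v ∈ s, (s.filter (G.Adj v)).card ≤ d)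
    (hL : ∀ v, 2 * d + 2 ≤ (L v).card) (α β : V → ℕ) (n : ℕ) :
    ∀ s : Finset V, s.card = n → OkOn G L s α → OkOn G L s β →
      ∃ ms, ValidOn G L s α ms ∧ (∀ u ∈ s, runMoves α ms u = β u) ∧
        ∀ u ∈ s, cnt u ms ≤ d + 1 := by
  induction n with
  | zero =>
    intro s hs _ _
    rw [Finset.card_eq_zero] at hs
    subst hs
    exact ⟨[], trivial, by simp, by simp⟩
  | succ n ih =>
    intro t ht hα hβ
    obtain ⟨v, hvt, hdeg⟩ := hdegen t (Finset.card_pos.1 (by omega))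
    obtain ⟨s, hvs, rfl⟩ : ∃ s, v ∉ s ∧ insert v s = t :=
      ⟨t.erase v, Finset.notMem_erase _ _, Finset.insert_erase hvt⟩
    have hsub := Finset.subset_insert v s
    obtain ⟨ms, h1, h2, h3⟩ := ih s (by rw [Finset.card_insert_of_notMem hvs] at ht; omega)
      (okOn_mono G L hsub _ hα) (okOn_mono G L hsub _ hβ)
    have hN : (s.filter (G.Adj v)).card ≤ d :=
      (Finset.card_le_card (Finset.filter_subset_filter _ hsub)).trans hdeg
    obtain ⟨ms', g1, g2, g3, g4⟩ := lift_moves G L d s v hvs hN (hL v) ms α α 0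
      (fun _ _ => rfl) hα h1 (by simp)
    have hlen : (ncol G v ms).length ≤ d * (d + 1) := by
      rw [ncol_length G L s v ms α h1]
      refine (Finset.sum_le_card_nsmul _ _ (d + 1) ?_).trans ?_
      · intro u hu; exact h3 u (Finset.mem_filter.1 hu).1
      · rw [smul_eq_mul]; exact Nat.mul_le_mul_right _ hN
    have hcv : cnt v ms' ≤ d := by
      by_contra h
      have := Nat.mul_le_mul_right (d + 1) (Nat.succ_le_of_lt (not_le.1 h))
      rw [Nat.succ_mul] at this
      omega
    have hfin : ∀ u ∈ insert v s, Function.update (runMoves α ms') v (β v) u = β u := by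
      intro u hu
      by_cases h : u = v
      · subst h; simp
      · have hus := Finset.mem_of_mem_insert_of_ne hu h
        rw [Function.update_of_ne h, g2 u hus, h2 u hus]
    obtain ⟨a, b, e⟩ := valid_append G L (insert v s) v (β v) (Finset.mem_insert_self _ _) ms' α g1
      (okOn_congr G L _ _ hβ hfin)
    refine ⟨_, a, by rwa [b], ?_⟩
    intro u hu
    rw [e]
    by_cases h : u = v
    · subst h; simpa using hcv
    · have hus := Finset.mem_of_mem_insert_of_ne hu h
      rw [if_neg (Ne.symm h), g3 u hus]; exact h3 u hus

lemma to_seq [Fintype V] (ms : List (V × ℕ)) :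
    ∀ φ, OkOn G L Finset.univ φ → ValidOn G L Finset.univ φ ms →
      ∃ (m : ℕ) (f : Fin (m + 1) → V → ℕ), IsRecolSeq G L f φ (runMoves φ ms) ∧
        (∀ v, recolorCount f v ≤ cnt v ms) ∧ m ≤ ms.length := by
  induction ms with
  | nil =>
    intro φ h _
    refine ⟨0, fun _ => φ, ⟨rfl, rfl, fun _ => ⟨fun v => h.1 v (Finset.mem_univ _), ?_⟩,
      fun i => i.elim0⟩, fun v => by simp [recolorCount], le_rfl⟩
    intro u w; exact h.2 u (Finset.mem_univ _) w (Finset.mem_univ _)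
  | cons p ms ih =>
    intro φ h hv
    obtain ⟨x, c⟩ := p
    obtain ⟨m, f, ⟨f0, f1, f2, f3⟩, hc, hm⟩ := ih _ hv.2.1 hv.2.2
    simp only at f0
    by_cases hx : c = φ x
    · refine ⟨m, f, ⟨by rw [f0, hx, Function.update_eq_self], f1, f2, f3⟩,
        fun v => (hc v).trans ?_, hm.trans (by simp)⟩
      simp [cnt]
    · have hne : ∀ v, φ v ≠ f 0 v ↔ x = v := by
        intro v
        rw [f0]
        by_cases h : v = x
        · subst h; simpa using Ne.symm hx
        · simp [h, Ne.symm h]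
      refine ⟨m + 1, Fin.cons φ f, ⟨rfl, ?_, ?_, ?_⟩, ?_, by simpa using hm⟩
      · rw [← Fin.succ_last, Fin.cons_succ, f1]; rfl
      · intro i
        refine Fin.cases ?_ (fun i => ?_) i
        · refine ⟨fun v => h.1 v (Finset.mem_univ _), ?_⟩
          intro u w; exact h.2 u (Finset.mem_univ _) w (Finset.mem_univ _)
        · exact f2 i
      · intro i
        refine Fin.cases ?_ (fun i => ?_) i
        · refine ⟨x, (hne x).2 rfl, fun y hy => ((hne y).1 hy).symm⟩
        · exact f3 i
      · intro v
        have h1 := hc v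
        unfold recolorCount at h1 ⊢
        rw [Finset.card_filter] at h1 ⊢
        rw [Fin.sum_univ_succ]
        simp only [cnt]
        refine add_le_add (le_of_eq ?_) h1
        exact if_congr (hne v) rfl rfl

lemma length_eq_sum [Fintype V] (ms : List (V × ℕ)) : ms.length = ∑ u, cnt u ms := by
  induction ms with
  | nil => simp [cnt]
  | cons m ms ih => simp [cnt, Finset.sum_add_distrib, ih, add_comm]

end

/-- if `G` is `d`-degenerate (every nonempty subgraph has a vertex of
degree at most `d`) and `|L(v)| ≥ 2d + 2` for all `v`, then any `L`-coloring `α`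
can be recolored to any `L`-coloring `β` recoloring each vertex at most `d + 1`
times; in particular the sequence has length at most `(d + 1)|V(G)|`. -/
theorem stmt_1 {V : Type} [Fintype V] [DecidableEq V]
    (G : SimpleGraph V) [DecidableRel G.Adj]
    (d : ℕ) (hd : 0 < d)
    (hdegen : ∀ s : Finset V, s.Nonempty → ∃ v ∈ s, (s.filter (G.Adj v)).card ≤ d)
    (L : V → Finset ℕ) (hL : ∀ v, 2 * d + 2 ≤ (L v).card)
    (α β : V → ℕ) (hα : IsLColoring G L α) (hβ : IsLColoring G L β) :
    ∃ (m : ℕ) (φ : Fin (m + 1) → V → ℕ),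
      IsRecolSeq G L φ α β ∧ (∀ v : V, recolorCount φ v ≤ d + 1) ∧
      m ≤ (d + 1) * Fintype.card V := by
  have hA : ∀ γ, IsLColoring G L γ → OkOn G L Finset.univ γ := fun γ h =>
    ⟨fun u _ => h.1 u, fun u _ w _ ha => h.2 ha⟩
  obtain ⟨ms, h1, h2, h3⟩ := exists_moves_s1 G L d hdegen hL α β _ Finset.univ rfl (hA α hα) (hA β hβ)
  obtain ⟨m, f, hf, hc, hm⟩ := to_seq G L ms α (hA α hα) h1
  have hb : runMoves α ms = β := funext fun u => h2 u (Finset.mem_univ _)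
  rw [hb] at hf
  refine ⟨m, f, hf, fun v => (hc v).trans (h3 v (Finset.mem_univ _)), hm.trans ?_⟩
  rw [length_eq_sum]
  refine (Finset.sum_le_card_nsmul _ _ (d + 1) h3).trans ?_
  rw [smul_eq_mul, mul_comm, Finset.card_univ]
end

section
/- Let G be a finite simple graph, S a set of vertices of G, L a list assignment with |L(v)| = 10 for all vertices, and α and β two L-colorings of G that agree on every vertex outside S. Suppose there is an ordering v_1, …, v_n of S such that for each i, d_G(v_i) + |{ j > i : v_j is adjacent to v_i }| ≤ 9, where d_G denotes degree in G. Then G has a recoloring sequence from α to β that recolors each vertex of S at most twice and recolors no vertex outside S. -/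
def Reach {V : Type} (G : SimpleGraph V) (L : V → Finset ℕ) (α β : V → ℕ) (c : V → ℕ) : Prop :=
  ∃ (m : ℕ) (φ : Fin (m + 1) → V → ℕ), IsRecolSeq G L φ α β ∧ ∀ v, recolorCount φ v ≤ c v

theorem Reach.refl {V : Type} {G : SimpleGraph V} {L : V → Finset ℕ} {α : V → ℕ}
    (hα : IsLColoring G L α) : Reach G L α α (fun _ => 0) :=
  ⟨0, fun _ => α, ⟨rfl, rfl, fun _ => hα, fun i => i.elim0⟩, fun v => by simp [recolorCount]⟩

theorem Reach.step {V : Type} {G : SimpleGraph V} {L : V → Finset ℕ} {α β γ : V → ℕ}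
    {c c' : V → ℕ} (h : Reach G L α β c) (hγ : IsLColoring G L γ) (v : V)
    (hv : ∀ u, u ≠ v → γ u = β u) (hc : ∀ u, c u ≤ c' u) (hcv : c v + 1 ≤ c' v) :
    Reach G L α γ c' := by
  obtain ⟨m, φ, ⟨h0, hl, hcol, hstep⟩, hcount⟩ := h
  by_cases hb : γ v = β v
  · have : γ = β := by
      funext u
      by_cases hu : u = v
      · rw [hu, hb]
      · exact hv u hu
    subst this
    exact ⟨m, φ, ⟨h0, hl, hcol, hstep⟩, fun u => (hcount u).trans (hc u)⟩
  · refine ⟨m + 1, Fin.snoc (α := fun _ => V → ℕ) φ γ, ⟨?_, ?_, ?_, ?_⟩, ?_⟩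
    · rw [← Fin.castSucc_zero, Fin.snoc_castSucc, h0]
    · simp
    · intro i
      refine Fin.lastCases ?_ (fun j => ?_) i
      · simpa using hγ
      · simpa using hcol j
    · intro i
      refine Fin.lastCases ?_ (fun j => ?_) i
      · rw [Fin.succ_last, Fin.snoc_last, Fin.snoc_castSucc, hl]
        refine ⟨v, fun h => hb h.symm, fun u hu => ?_⟩
        by_contra hne
        exact hu (hv u hne).symm
      · rw [Fin.succ_castSucc, Fin.snoc_castSucc, Fin.snoc_castSucc]
        exact hstep j
    · intro u
      have key : recolorCount (Fin.snoc (α := fun _ => V → ℕ) φ γ : Fin (m + 1 + 1) → V → ℕ) u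
          = recolorCount φ u + if β u ≠ γ u then 1 else 0 := by
        unfold recolorCount
        rw [Finset.card_filter, Finset.card_filter, Fin.sum_univ_castSucc]
        congr 1
        · refine Finset.sum_congr rfl fun j _ => ?_
          rw [Fin.succ_castSucc, Fin.snoc_castSucc, Fin.snoc_castSucc]
        · rw [Fin.succ_last, Fin.snoc_last, Fin.snoc_castSucc, hl]
      rw [key]
      have h1 := hcount u
      have h2 := hc u
      by_cases hu : u = v
      · subst hu
        split_ifs <;> omega
      · simp [hv u hu]
        omega

theorem exists_mid {V : Type} [Fintype V] [DecidableEq V]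
    (G : SimpleGraph V) [DecidableRel G.Adj]
    (L : V → Finset ℕ) (hL : ∀ v, (L v).card = 10) (α β : V → ℕ) (n : ℕ) (r : V → ℕ)
    (hagree : ∀ v, n ≤ r v → α v = β v)
    (hinj : ∀ u v, r u < n → r u = r v → u = v)
    (hord : ∀ v, r v < n → G.degree v +
      ((G.neighborFinset v).filter fun u => r v < r u ∧ r u < n).card ≤ 9) (k : ℕ) (hk : k ≤ n) :
    ∃ γ : V → ℕ, ∀ v, r v < k → γ v ∈ L v ∧ ∀ u, G.Adj v u →
      (r v < r u → γ v ≠ α u ∧ γ v ≠ β u) ∧ (r u < r v → γ v ≠ γ u) := by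
  induction k with
  | zero => exact ⟨α, fun v hv => absurd hv (Nat.not_lt_zero _)⟩
  | succ k ih =>
    obtain ⟨γ, hγ⟩ := ih (by omega)
    by_cases hex : ∃ v, r v = k
    · obtain ⟨v, hv⟩ := hex
      let B : Finset ℕ := (G.neighborFinset v).image (fun u => if r u < r v then γ u else α u) ∪
        ((G.neighborFinset v).filter fun u => r v < r u ∧ r u < n).image β
      have hB : B.card < (L v).card := by
        have h1 := hord v (by omega)
        have h2 : B.card ≤ _ := Finset.card_union_le _ _
        have h3 := Finset.card_image_le (s := G.neighborFinset v)
          (f := fun u => if r u < r v then γ u else α u)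
        have h4 := Finset.card_image_le
          (s := (G.neighborFinset v).filter fun u => r v < r u ∧ r u < n) (f := β)
        rw [G.card_neighborFinset_eq_degree] at h3
        rw [hL]
        omega
      obtain ⟨x, hxL, hxB⟩ := Finset.exists_mem_notMem_of_card_lt_card hB
      have hx1 : ∀ u, G.Adj v u → x ≠ if r u < r v then γ u else α u := by
        intro u hu he
        apply hxB
        refine Finset.mem_union_left _ (Finset.mem_image.2 ⟨u, by simpa using hu, he.symm⟩)
      have hx2 : ∀ u, G.Adj v u → r v < r u → r u < n → x ≠ β u := by
        intro u hu h1 h2 he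
        apply hxB
        exact Finset.mem_union_right _ (Finset.mem_image.2 ⟨u, by simp [hu, h1, h2], he.symm⟩)
      refine ⟨Function.update γ v x, fun w hw => ?_⟩
      by_cases hwv : w = v
      · subst hwv
        rw [Function.update_self]
        refine ⟨hxL, fun u hu => ⟨fun hlt => ?_, fun hlt => ?_⟩⟩
        · have h1 := hx1 u hu
          rw [if_neg (by omega)] at h1
          refine ⟨h1, ?_⟩
          by_cases hn : r u < n
          · exact hx2 u hu hlt hn
          · rw [← hagree u (by omega)]
            exact h1
        · have h1 := hx1 u hu
          rw [if_pos hlt] at h1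
          rw [Function.update_of_ne hu.ne']
          exact h1
      · have hwk : r w < k := by
          rcases Nat.lt_or_ge (r w) k with h | h
          · exact h
          · exact absurd (hinj w v (by omega) (by omega)) hwv
        rw [Function.update_of_ne hwv]
        refine ⟨(hγ w hwk).1, fun u hu => ⟨((hγ w hwk).2 u hu).1, fun hlt => ?_⟩⟩
        have : u ≠ v := by
          rintro rfl
          omega
        rw [Function.update_of_ne this]
        exact ((hγ w hwk).2 u hu).2 hlt
    · refine ⟨γ, fun v hv => hγ v ?_⟩
      have : r v ≠ k := fun h => hex ⟨v, h⟩
      omega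

/-- mixing the intermediate coloring with one that it is compatible with -/
theorem mix_col {V : Type} {G : SimpleGraph V} {L : V → Finset ℕ} {α γ : V → ℕ} {n : ℕ}
    {r : V → ℕ} (hα : IsLColoring G L α) (hinj : ∀ u v, r u < n → r u = r v → u = v)
    (hγ : ∀ v, r v < n → γ v ∈ L v ∧ ∀ u, G.Adj v u →
      (r v < r u → γ v ≠ α u) ∧ (r u < r v → γ v ≠ γ u)) (k : ℕ) (hk : k ≤ n) :
    IsLColoring G L (fun v => if r v < k then γ v else α v) := by
  refine ⟨fun v => ?_, fun u w huw => ?_⟩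
  · dsimp only
    split_ifs with h
    · exact (hγ v (by omega)).1
    · exact hα.1 v
  · dsimp only
    split_ifs with h1 h2 h2
    · rcases Nat.lt_trichotomy (r u) (r w) with h | h | h
      · exact (((hγ w (by omega)).2 u huw.symm).2 h).symm
      · exact absurd (hinj u w (by omega) h) huw.ne
      · exact ((hγ u (by omega)).2 w huw).2 h
    · exact ((hγ u (by omega)).2 w huw).1 (by omega)
    · exact (((hγ w (by omega)).2 u huw.symm).1 (by omega)).symm
    · exact hα.2 huw

theorem main_rank {V : Type} [Fintype V] [DecidableEq V]
    (G : SimpleGraph V) [DecidableRel G.Adj]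
    (L : V → Finset ℕ) (hL : ∀ v, (L v).card = 10) (α β : V → ℕ)
    (hα : IsLColoring G L α) (hβ : IsLColoring G L β) (n : ℕ) (r : V → ℕ)
    (hagree : ∀ v, n ≤ r v → α v = β v)
    (hinj : ∀ u v, r u < n → r u = r v → u = v)
    (hsurj : ∀ k, k < n → ∃ v, r v = k)
    (hord : ∀ v, r v < n → G.degree v +
      ((G.neighborFinset v).filter fun u => r v < r u ∧ r u < n).card ≤ 9) :
    Reach G L α β (fun v => if r v < n then 2 else 0) := by
  obtain ⟨γ, hγ⟩ := exists_mid G L hL α β n r hagree hinj hord n le_rfl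
  have hA := mix_col (γ := γ) hα hinj (fun v hv => ⟨(hγ v hv).1, fun u hu =>
    ⟨fun h => (((hγ v hv).2 u hu).1 h).1, ((hγ v hv).2 u hu).2⟩⟩)
  have hB := mix_col (γ := γ) hβ hinj (fun v hv => ⟨(hγ v hv).1, fun u hu =>
    ⟨fun h => (((hγ v hv).2 u hu).1 h).2, ((hγ v hv).2 u hu).2⟩⟩)
  have P1 : ∀ k, k ≤ n → Reach G L α (fun v => if r v < k then γ v else α v)
      (fun v => if r v < k then 1 else 0) := by
    intro k
    induction k with
    | zero =>
      intro _
      simpa using Reach.refl hα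
    | succ k ih =>
      intro hk
      obtain ⟨v, hv⟩ := hsurj k (by omega)
      refine (ih (by omega)).step (hA (k + 1) hk) v (fun u hu => ?_) (fun u => ?_) ?_
      · have : r u ≠ k := fun h => hu (hinj u v (by omega) (by omega))
        have : r u < k + 1 ↔ r u < k := by omega
        simp only [this]
      · split_ifs <;> omega
      · simp [hv]
  have P2 : ∀ k, k ≤ n → Reach G L α (fun v => if r v < n - k then γ v else β v)
      (fun v => if r v < n - k then 1 else if r v < n then 2 else 0) := by
    intro k
    induction k with
    | zero =>
      intro _
      have h := P1 n le_rfl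
      have e1 : (fun v => if r v < n then γ v else α v)
          = (fun v => if r v < n - 0 then γ v else β v) := by
        funext v
        rw [Nat.sub_zero]
        split_ifs with h
        · rfl
        · exact hagree v (by omega)
      have e2 : (fun v => if r v < n then 1 else 0)
          = (fun v => if r v < n - 0 then 1 else if r v < n then 2 else 0) := by
        funext v
        rw [Nat.sub_zero]
        split_ifs <;> rfl
      rw [e1, e2] at h
      exact h
    | succ k ih =>
      intro hk
      obtain ⟨v, hv⟩ := hsurj (n - (k + 1)) (by omega)
      refine (ih (by omega)).step (hB (n - (k + 1)) (by omega)) v (fun u hu => ?_)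
        (fun u => ?_) ?_
      · have : r u ≠ n - (k + 1) := fun h => hu (hinj u v (by omega) (by omega))
        have : r u < n - (k + 1) ↔ r u < n - k := by omega
        simp only [this]
      · split_ifs <;> omega
      · split_ifs <;> omega
  simpa using P2 n le_rfl

/-- if `α` and `β` are `L`-colorings (with all lists of size 10)
agreeing outside `S`, and `S` admits an ordering `v_1, …, v_n` in which each `v_i`
satisfies `d_G(v_i) + #{later neighbors in the ordering} ≤ 9`, then `G` has a
recoloring sequence from `α` to `β` that recolors each vertex of `S` at most
twice and no vertex outside `S`. -/
theorem stmt_2 {V : Type} [Fintype V] [DecidableEq V]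
    (G : SimpleGraph V) [DecidableRel G.Adj]
    (L : V → Finset ℕ) (hL : ∀ v, (L v).card = 10)
    (S : Finset V)
    (α β : V → ℕ) (hα : IsLColoring G L α) (hβ : IsLColoring G L β)
    (hagree : ∀ v : V, v ∉ S → α v = β v)
    (e : Fin S.card ≃ {x : V // x ∈ S})
    (horder : ∀ i : Fin S.card,
      G.degree (e i).1 +
        (Finset.univ.filter fun j : Fin S.card =>
          i < j ∧ G.Adj (e i).1 (e j).1).card ≤ 9) :
    ∃ (m : ℕ) (φ : Fin (m + 1) → V → ℕ),
      IsRecolSeq G L φ α β ∧ (∀ v ∈ S, recolorCount φ v ≤ 2) ∧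
      ∀ v : V, v ∉ S → recolorCount φ v = 0 := by
  classical
  let r : V → ℕ := fun v => if h : v ∈ S then (e.symm ⟨v, h⟩).val else S.card
  have hrS : ∀ v, v ∈ S ↔ r v < S.card := by
    intro v
    by_cases h : v ∈ S
    · simp [r, h]
    · simp [r, h]
  have hre : ∀ i, r (e i).1 = i.val := by
    intro i
    simp [r]
  have hev : ∀ v (h : r v < S.card), (e ⟨r v, h⟩).1 = v := by
    intro v h
    have hv := (hrS v).2 h
    have : (⟨r v, h⟩ : Fin S.card) = e.symm ⟨v, hv⟩ := by
      apply Fin.ext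
      simp [r, hv]
    rw [this, Equiv.apply_symm_apply]
  obtain ⟨m, φ, h1, h2⟩ := main_rank G L hL α β hα hβ S.card r
    (fun v hv => hagree v (fun h => by have := (hrS v).1 h; omega))
    (fun u v hu huv => by
      have a := hev u hu
      have b := hev v (huv ▸ hu)
      rw [← a, ← b]
      simp only [huv])
    (fun k hk => ⟨(e ⟨k, hk⟩).1, hre _⟩)
    (fun v hv => by
      have h := horder ⟨r v, hv⟩
      rw [hev v hv] at h
      refine le_trans (Nat.add_le_add_left ?_ _) h
      have hsub : ((G.neighborFinset v).filter fun u => r v < r u ∧ r u < S.card) ⊆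
          (Finset.univ.filter fun j : Fin S.card =>
            (⟨r v, hv⟩ : Fin S.card) < j ∧ G.Adj v (e j).1).image (fun j => (e j).1) := by
        intro u hu
        simp only [Finset.mem_filter, SimpleGraph.mem_neighborFinset] at hu
        refine Finset.mem_image.2 ⟨⟨r u, hu.2.2⟩, ?_, hev u hu.2.2⟩
        simp only [Finset.mem_filter, Finset.mem_univ, true_and, hev u hu.2.2]
        exact ⟨hu.2.1, hu.1⟩
      exact (Finset.card_le_card hsub).trans Finset.card_image_le)
  refine ⟨m, φ, h1, fun v hv => ?_, fun v hv => ?_⟩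
  · have : recolorCount φ v ≤ if r v < S.card then 2 else 0 := h2 v
    rwa [if_pos ((hrS v).1 hv)] at this
  · have : recolorCount φ v ≤ if r v < S.card then 2 else 0 := h2 v
    rw [if_neg (fun h => hv ((hrS v).2 h))] at this
    omega
end

section
/- Fix an integer k ≥ 416. Let G be a finite simple graph, L a 10-assignment for G, and α, β two L-colorings of G. Suppose G contains five distinct vertices v, w, x, y, z such that vw, wx, wy, xy, xz, yz are edges of G, d_G(v) = d_G(z) = 5, and d_G(w) = d_G(x) = d_G(y) = 6. Let S = {v, w, x, y, z}. If there exists a k-good recoloring sequence in G − S from the restriction of α to G − S to the restriction of β to G − S, then there exists a k-good recoloring sequence in G from α to β. -/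
namespace Recol

set_option linter.unusedSectionVars false

variable {V : Type} [DecidableEq V]

/-- A list of moves `(u, c)`, avoiding the set `S`, is valid from `φ`. -/
def OValid (G : SimpleGraph V) (L : V → Finset ℕ) (S : Set V) :
    (V → ℕ) → List (V × ℕ) → Prop
  | _, [] => True
  | φ, p :: ms => p.1 ∉ S ∧ p.2 ∈ L p.1 ∧ φ p.1 ≠ p.2 ∧
      (∀ t, G.Adj p.1 t → t ∉ S → φ t ≠ p.2) ∧ OValid G L S (Function.update φ p.1 p.2) ms

def run : (V → ℕ) → List (V × ℕ) → (V → ℕ)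
  | φ, [] => φ
  | φ, p :: ms => run (Function.update φ p.1 p.2) ms

def cnt (u : V) (ms : List (V × ℕ)) : ℕ := ms.countP (fun p => p.1 = u)

lemma cnt_nil (u : V) : cnt u [] = 0 := rfl

lemma cnt_cons (u : V) (p : V × ℕ) (ms) :
    cnt u (p :: ms) = cnt u ms + if p.1 = u then 1 else 0 := by
  simp [cnt, List.countP_cons]

lemma cnt_append (u : V) (a b) : cnt u (a ++ b) = cnt u a + cnt u b := by
  simp [cnt]

lemma run_append (φ : V → ℕ) (a b) : run φ (a ++ b) = run (run φ a) b := by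
  induction a generalizing φ with
  | nil => rfl
  | cons p a ih => simp [run, ih]

lemma OValid_append {G : SimpleGraph V} {L S} (φ : V → ℕ) (a b)
    (ha : OValid G L S φ a) (hb : OValid G L S (run φ a) b) : OValid G L S φ (a ++ b) := by
  induction a generalizing φ with
  | nil => exact hb
  | cons p a ih =>
    obtain ⟨h1, h2, h3, h4, h5⟩ := ha
    exact ⟨h1, h2, h3, h4, ih _ h5 hb⟩

lemma OValid_congr {G : SimpleGraph V} {L S} (φ ψ : V → ℕ) (ms)
    (h : ∀ t, t ∉ S → φ t = ψ t) (hv : OValid G L S φ ms) : OValid G L S ψ ms := by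
  induction ms generalizing φ ψ with
  | nil => trivial
  | cons p a ih =>
    obtain ⟨h1, h2, h3, h4, h5⟩ := hv
    refine ⟨h1, h2, h _ h1 ▸ h3, fun t ht hS => h t hS ▸ h4 t ht hS, ih _ _ ?_ h5⟩
    intro t ht
    by_cases e : t = p.1
    · subst e; simp
    · simp [e, h t ht]

lemma run_congr {S : Set V} (φ ψ : V → ℕ) (ms)
    (h : ∀ t, t ∉ S → φ t = ψ t) : ∀ t, t ∉ S → run φ ms t = run ψ ms t := by
  induction ms generalizing φ ψ with
  | nil => exact h
  | cons p a ih =>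
    apply ih
    intro t ht
    by_cases e : t = p.1
    · subst e; simp
    · simp [e, h t ht]

lemma update_proper {G : SimpleGraph V} {L} {φ : V → ℕ} (hφ : IsLColoring G L φ) (u : V) (c : ℕ)
    (hc : c ∈ L u) (h : ∀ t, G.Adj u t → φ t ≠ c) : IsLColoring G L (Function.update φ u c) := by
  refine ⟨fun t => ?_, fun a b hab => ?_⟩
  · by_cases e : t = u
    · subst e; simpa using hc
    · simpa [e] using hφ.1 t
  · by_cases ea : a = u
    · subst ea
      have : b ≠ a := hab.ne'
      simpa [this] using (h b hab).symm
    · by_cases eb : b = u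
      · subst eb
        simpa [ea] using (h a hab.symm)
      · simpa [ea, eb] using hφ.2 hab

/-- `ψ` can be reached from `φ` with at most `n t` recolorings of `t`. -/
def R (G : SimpleGraph V) (L : V → Finset ℕ) (φ ψ : V → ℕ) (n : V → ℕ) : Prop :=
  ∃ ms, OValid G L ∅ φ ms ∧ run φ ms = ψ ∧ ∀ u, cnt u ms ≤ n u

lemma R.refl (G : SimpleGraph V) (L) (φ : V → ℕ) : R G L φ φ (fun _ => 0) :=
  ⟨[], trivial, rfl, fun _ => le_rfl⟩

lemma R.trans {G : SimpleGraph V} {L} {φ ψ χ : V → ℕ} {n n'} (h : R G L φ ψ n)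
    (h' : R G L ψ χ n') : R G L φ χ (fun t => n t + n' t) := by
  obtain ⟨a, ha, rfl, hc⟩ := h
  obtain ⟨b, hb, rfl, hd⟩ := h'
  refine ⟨a ++ b, OValid_append _ _ _ ha hb, run_append _ _ _, fun u => ?_⟩
  rw [cnt_append]; exact add_le_add (hc u) (hd u)

lemma R.mono {G : SimpleGraph V} {L} {φ ψ : V → ℕ} {n n' : V → ℕ} (h : R G L φ ψ n)
    (h' : ∀ t, n t ≤ n' t) : R G L φ ψ n' := by
  obtain ⟨a, ha, e, hc⟩ := h
  exact ⟨a, ha, e, fun u => (hc u).trans (h' u)⟩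

/-- indicator -/
def ind (P : Prop) [Decidable P] : ℕ := if P then 1 else 0

lemma R.single {G : SimpleGraph V} {L} {φ : V → ℕ} (u : V) (c : ℕ)
    (hc : c ∈ L u) (hu : φ u ≠ c) (h : ∀ t, G.Adj u t → φ t ≠ c) :
    R G L φ (Function.update φ u c) (fun t => ind (t = u)) := by
  refine ⟨[(u, c)], ⟨by simp, hc, hu, fun t ht _ => h t ht, trivial⟩, rfl, fun t => ?_⟩
  simp [cnt_cons, cnt_nil, ind, eq_comm]

/-- outside sequence to list -/
lemma toList {G : SimpleGraph V} {L : V → Finset ℕ} {S : Set V} (m : ℕ) :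
    ∀ (α β : V → ℕ) (φ : Fin (m + 1) → ↥(Sᶜ) → ℕ),
      IsRecolSeq (G.induce Sᶜ) (fun u => L u.1) φ (fun u => α u.1) (fun u => β u.1) →
      ∃ ms, OValid G L S α ms ∧ (∀ t, t ∉ S → run α ms t = β t) ∧
        ∀ t (ht : t ∈ Sᶜ), cnt t ms = recolorCount φ ⟨t, ht⟩ := by
  induction m with
  | zero =>
    rintro α β φ ⟨h0, h1, -, -⟩
    refine ⟨[], trivial, fun t ht => ?_, fun t ht => ?_⟩
    · have := congrFun (h0.symm.trans h1) ⟨t, ht⟩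
      exact this
    · simp [cnt, recolorCount]
  | succ m ih =>
    rintro α β φ ⟨h0, h1, h2, h3⟩
    obtain ⟨u, hu, huniq⟩ := h3 0
    simp only [Fin.castSucc_zero, Fin.succ_zero_eq_one] at hu huniq
    let c := φ 1 u
    have key : ∀ t : ↥(Sᶜ), φ 1 t = Function.update α u.1 c t.1 := by
      intro t
      by_cases e : t = u
      · subst e; simp [c]
      · have e' : t.1 ≠ u.1 := fun h => e (Subtype.ext h)
        have : φ 0 t = φ 1 t := by
          by_contra hne
          exact e (huniq t hne)
        rw [← this, h0]; simp [e']
    obtain ⟨ms, hms, hrun, hcnt⟩ := ih (Function.update α u.1 c) β (fun i => φ i.succ) (by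
      refine ⟨?_, ?_, fun i => h2 _, fun i => ?_⟩
      · funext t; exact key t
      · rw [← h1]; rfl
      · have := h3 i.succ
        simpa using this)
    refine ⟨(u.1, c) :: ms, ⟨u.2, (h2 1).1 u, ?_, ?_, hms⟩, hrun, fun t ht => ?_⟩
    · have := congrFun h0 u
      change α u.1 ≠ c
      rw [← this]; exact hu
    · intro t ht htS
      have hadj : (G.induce Sᶜ).Adj u ⟨t, htS⟩ := ht
      have h5 := (h2 1).2 hadj
      have h6 := key ⟨t, htS⟩
      have : t ≠ u.1 := ht.ne'
      simp only [Function.update_of_ne this] at h6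
      rw [← h6]; exact h5.symm
    · rw [cnt_cons, hcnt t ht]
      unfold recolorCount
      rw [Fin.univ_succ, Finset.filter_cons]
      have h7 : (φ (Fin.castSucc 0) ⟨t, ht⟩ ≠ φ (Fin.succ 0) ⟨t, ht⟩) ↔ u.1 = t := by
        simp only [Fin.castSucc_zero, Fin.succ_zero_eq_one]
        constructor
        · intro h; rw [← huniq _ h]
        · rintro rfl; exact hu
      have h8 : (Finset.filter (fun i : Fin (m+1) => φ i.castSucc ⟨t, ht⟩ ≠ φ i.succ ⟨t, ht⟩)
          (Finset.map ⟨Fin.succ, Fin.succ_injective _⟩ Finset.univ)).card =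
          (Finset.filter (fun i : Fin m => φ i.castSucc.succ ⟨t, ht⟩ ≠ φ i.succ.succ ⟨t, ht⟩)
            Finset.univ).card := by
        rw [Finset.filter_map, Finset.card_map]
        rfl
      split_ifs with h9 h10 h10
      · rw [Finset.card_cons, h8]
      · exact absurd (h7.2 h9) h10
      · exact absurd (h7.1 h10) h9
      · rw [h8]; rfl

lemma ofList {G : SimpleGraph V} {L : V → Finset ℕ} (ms : List (V × ℕ)) :
    ∀ α, IsLColoring G L α → OValid G L ∅ α ms →
    ∃ (M : ℕ) (ψ : Fin (M + 1) → V → ℕ), IsRecolSeq G L ψ α (run α ms) ∧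
      ∀ u, recolorCount ψ u = cnt u ms := by
  induction ms with
  | nil =>
    intro α hα _
    refine ⟨0, fun _ => α, ⟨rfl, rfl, fun _ => hα, fun i => i.elim0⟩, fun u => ?_⟩
    simp [cnt, recolorCount]
  | cons p ms ih =>
    rintro α hα ⟨h1, h2, h3, h4, h5⟩
    obtain ⟨M, ψ, ⟨g0, g1, g2, g3⟩, hc⟩ := ih _ (update_proper hα p.1 p.2 h2
      (fun t ht => h4 t ht (by simp))) h5
    refine ⟨M + 1, Fin.cons α ψ, ⟨rfl, ?_, ?_, ?_⟩, fun u => ?_⟩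
    · rw [← Fin.succ_last, Fin.cons_succ]; exact g1
    · intro i
      refine Fin.cases ?_ (fun i => ?_) i
      · exact hα
      · simpa using g2 i
    · intro i
      refine Fin.cases ?_ (fun i => ?_) i
      · refine ⟨p.1, ?_, ?_⟩
        · simp [g0, h3]
        · intro t ht
          by_contra e
          simp [g0, e] at ht
      · have := g3 i
        simpa [← Fin.succ_castSucc] using this
    · rw [cnt_cons, ← hc]
      unfold recolorCount
      rw [Fin.univ_succ, Finset.filter_cons]
      have h8 : (Finset.filter (fun i : Fin (M+1) =>
            (Fin.cons α ψ : Fin (M+2) → V → ℕ) i.castSucc u ≠ (Fin.cons α ψ : Fin (M+2) → V → ℕ) i.succ u)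
          (Finset.map ⟨Fin.succ, Fin.succ_injective _⟩ Finset.univ)).card =
          (Finset.filter (fun i : Fin M => ψ i.castSucc u ≠ ψ i.succ u)
            Finset.univ).card := by
        rw [Finset.filter_map, Finset.card_map]
        rfl
      have h7 : ((Fin.cons α ψ : Fin (M+2) → V → ℕ) (Fin.castSucc 0) u ≠
          (Fin.cons α ψ : Fin (M+2) → V → ℕ) (Fin.succ 0) u) ↔ p.1 = u := by
        simp only [Fin.castSucc_zero, Fin.cons_zero, Fin.cons_succ, g0]
        by_cases e : u = p.1
        · subst e; simp [h3]
        · simp [e, Ne.symm e]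
      split_ifs with h9 h10 h10
      · rw [Finset.card_cons, h8]
      · exact absurd (h7.1 h9) h10
      · exact absurd (h7.2 h10) h9
      · rw [h8]; rfl

variable (G : SimpleGraph V) [DecidableRel G.Adj]

/-- colors of the events at neighbors of `u` -/
def es (u : V) : List (V × ℕ) → List ℕ
  | [] => []
  | p :: ms => if G.Adj u p.1 then p.2 :: es u ms else es u ms

def Inv (φ : V → ℕ) (ms : List (V × ℕ)) (u : V) (m J o h s : ℕ) : Prop :=
  ∃ j, j ≤ J ∧ φ u ∉ (es G u ms).take j ∧ (es G u ms).length + s ≤ j + m * o + h ∧ h ≤ o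

variable {G} {L : V → Finset ℕ}

lemma Inv_congr {φ φ' : V → ℕ} {ms u m J o h s} (hh : Inv G φ ms u m J o h s) (e : φ' u = φ u) :
    Inv G φ' ms u m J o h s := by
  unfold Inv at *; rw [e]; exact hh

variable [Fintype V]

/-- choosing a colour -/
lemma choose_color (hL : ∀ u, (L u).card = 10) (φ : V → ℕ) (u : V) (fl : List ℕ)
    (hd : G.degree u + fl.length ≤ 8) :
    ∃ c ∈ L u, c ≠ φ u ∧ c ∉ fl ∧ ∀ t, G.Adj u t → φ t ≠ c := by
  have : ∃ c ∈ L u, c ∉ insert (φ u) ((G.neighborFinset u).image φ ∪ fl.toFinset) := by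
    apply Finset.exists_mem_notMem_of_card_lt_card
    calc _ ≤ _ := Finset.card_insert_le _ _
      _ ≤ _ := Nat.add_le_add_right (Finset.card_union_le _ _) 1
      _ ≤ G.degree u + fl.length + 1 := by
        have h1 : ((G.neighborFinset u).image φ).card ≤ G.degree u := Finset.card_image_le
        have h2 := fl.toFinset_card_le
        omega
      _ < _ := by rw [hL]; omega
  obtain ⟨c, hc, hn⟩ := this
  simp only [Finset.mem_insert, Finset.mem_union, Finset.mem_image, SimpleGraph.mem_neighborFinset,
    List.mem_toFinset, not_or, not_exists, not_and] at hn
  exact ⟨c, hc, hn.1, hn.2.2, fun t ht => hn.2.1 t ht⟩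

lemma choose_color' (hL : ∀ u, (L u).card = 10) (φ : V → ℕ) (u q : V) (hq : G.Adj u q)
    (fl : List ℕ) (hd : G.degree u + fl.length ≤ 9) :
    ∃ c ∈ L u, c ≠ φ u ∧ c ∉ fl ∧ ∀ t, G.Adj u t → t ≠ q → φ t ≠ c := by
  have : ∃ c ∈ L u, c ∉ insert (φ u) (((G.neighborFinset u).erase q).image φ ∪ fl.toFinset) := by
    apply Finset.exists_mem_notMem_of_card_lt_card
    calc _ ≤ _ := Finset.card_insert_le _ _
      _ ≤ _ := Nat.add_le_add_right (Finset.card_union_le _ _) 1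
      _ ≤ G.degree u - 1 + fl.length + 1 := by
        have h1 : (((G.neighborFinset u).erase q).image φ).card ≤ _ := Finset.card_image_le
        rw [Finset.card_erase_of_mem (by simpa using hq), SimpleGraph.card_neighborFinset_eq_degree]
          at h1
        have h2 := fl.toFinset_card_le
        omega
      _ < _ := by
        have : 0 < G.degree u := (G.degree_pos_iff_exists_adj u).2 ⟨q, hq⟩
        rw [hL]; omega
  obtain ⟨c, hc, hn⟩ := this
  simp only [Finset.mem_insert, Finset.mem_union, Finset.mem_image, SimpleGraph.mem_neighborFinset,
    List.mem_toFinset, not_or, not_exists, not_and, Finset.mem_erase] at hn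
  exact ⟨c, hc, hn.1, hn.2.2, fun t ht htq => hn.2.1 t ⟨htq, ht⟩⟩

lemma moveA (hL : ∀ u, (L u).card = 10) {φ : V → ℕ} (hφ : IsLColoring G L φ) (u : V)
    (fl : List ℕ) (hd : G.degree u + fl.length ≤ 8) :
    ∃ φ', IsLColoring G L φ' ∧ R G L φ φ' (fun t => ind (t = u)) ∧ (∀ t, t ≠ u → φ' t = φ t) ∧
      φ' u ≠ φ u ∧ φ' u ∉ fl := by
  obtain ⟨c, h1, h2, h3, h4⟩ := choose_color hL φ u fl hd
  refine ⟨Function.update φ u c, update_proper hφ u c h1 h4, R.single u c h1 h2.symm h4, ?_, ?_, ?_⟩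
  · intro t ht; simp [ht]
  · simpa using h2
  · simpa using h3

lemma moveB (hL : ∀ u, (L u).card = 10) {φ : V → ℕ} (hφ : IsLColoring G L φ) (u q : V)
    (hq : G.Adj u q) (fl flq : List ℕ) (hd : G.degree u + fl.length ≤ 9)
    (hdq : G.degree q + flq.length ≤ 8) :
    ∃ φ', IsLColoring G L φ' ∧ R G L φ φ' (fun t => ind (t = u) + ind (t = q)) ∧
      (∀ t, t ≠ u → t ≠ q → φ' t = φ t) ∧
      φ' u ≠ φ u ∧ φ' u ∉ fl ∧ (φ' q = φ q ∨ φ' q ∉ flq) := by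
  obtain ⟨c, h1, h2, h3, h4⟩ := choose_color' hL φ u q hq fl hd
  have huq : u ≠ q := hq.ne
  by_cases e : φ q = c
  · obtain ⟨φ1, p1, r1, o1, n1, f1⟩ := moveA hL hφ q flq hdq
    have h4' : ∀ t, G.Adj u t → φ1 t ≠ c := by
      intro t ht
      by_cases et : t = q
      · subst et; rw [← e]; exact n1
      · rw [o1 t et]; exact h4 t ht et
    have h2' : φ1 u ≠ c := by rw [o1 u huq]; exact h2.symm
    refine ⟨Function.update φ1 u c, update_proper p1 u c h1 h4',
      (r1.trans (R.single u c h1 h2' h4')).mono ?_, ?_, ?_, ?_, ?_⟩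
    · intro t; omega
    · intro t ht htq; simp [ht, o1 t htq]
    · simpa using h2
    · simpa using h3
    · right; simpa [huq.symm] using f1
  · have h4' : ∀ t, G.Adj u t → φ t ≠ c := by
      intro t ht
      by_cases et : t = q
      · subst et; exact e
      · exact h4 t ht et
    refine ⟨Function.update φ u c, update_proper hφ u c h1 h4', (R.single u c h1 h2.symm h4').mono ?_,
      ?_, ?_, ?_, ?_⟩
    · intro t; omega
    · intro t ht _; simp [ht]
    · simpa using h2
    · simpa using h3
    · left; simp [huq.symm]

/-- no move needed -/
lemma Inv_pass {φ : V → ℕ} {p ms u m J o h s} (hh : Inv G φ (p :: ms) u m J o h s)  :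
    Inv G φ ms u m J o h s := by
  obtain ⟨j, hJ, hn, hl, ho⟩ := hh
  simp only [es] at hn hl
  split_ifs at hn hl with ha
  · refine ⟨j - 1, by omega, ?_, ?_, ho⟩
    · cases j with
      | zero => simp
      | succ j => simp at hn; simpa using hn.2
    · simp at hl; omega
  · exact ⟨j, hJ, hn, hl, ho⟩

lemma Inv_kill {φ : V → ℕ} {p : V × ℕ} {ms u m J o h s} (hh : Inv G φ (p :: ms) u m J o h s)
    (ha : G.Adj u p.1) (hc : φ u = p.2) :
    ∃ o', o = o' + 1 ∧ (es G u ms).length + 1 + s ≤ m * o' + m + h ∧ h ≤ o' + 1 := by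
  obtain ⟨j, hJ, hn, hl, ho⟩ := hh
  simp only [es, ha, if_true] at hn hl
  have hj : j = 0 := by
    cases j with
    | zero => rfl
    | succ j => simp [hc] at hn
  subst hj
  cases o with
  | zero => simp at hl ho; omega
  | succ o' => exact ⟨o', rfl, by simp at hl; rw [Nat.mul_succ] at hl; omega, ho⟩

/-- step without help -/
lemma step0 (hL : ∀ u, (L u).card = 10) {φ : V → ℕ} (hφ : IsLColoring G L φ) {p : V × ℕ} {ms}
    {u : V} {m J o s : ℕ} (hu : Inv G φ (p :: ms) u m J o 0 s) (hm : m + G.degree u = 9)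
    (hm1 : 1 ≤ m) (hJ : m ≤ J + 1) :
    ∃ φ' o' a, IsLColoring G L φ' ∧ R G L φ φ' (fun t => if t = u then a else 0) ∧
      (∀ t, t ≠ u → φ' t = φ t) ∧ a + o' ≤ o ∧ Inv G φ' ms u m J o' 0 s ∧
      (G.Adj u p.1 → φ' u ≠ p.2) := by
  by_cases hk : G.Adj u p.1 ∧ φ u = p.2
  · obtain ⟨o', rfl, h1, h2⟩ := Inv_kill hu hk.1 hk.2
    obtain ⟨φ', p1, r1, q1, n1, f1⟩ := moveA hL hφ u ((es G u ms).take (m - 1)) (by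
      have := List.length_take_le (m - 1) (es G u ms)
      omega)
    refine ⟨φ', o', 1, p1, r1, q1, by omega, ⟨m - 1, by omega, f1, by omega, by omega⟩, fun _ => ?_⟩
    rw [← hk.2]; exact n1
  · refine ⟨φ, o, 0, hφ, (R.refl G L φ).mono (by simp), fun _ _ => rfl, by omega, Inv_pass hu, ?_⟩
    intro ha hc; exact hk ⟨ha, hc⟩

/-- step with possible help -/
lemma step1 (hL : ∀ u, (L u).card = 10) {φ : V → ℕ} (hφ : IsLColoring G L φ) {p : V × ℕ} {ms}
    {u q : V} {m o h s mq Jq oq hq sq : ℕ} (hu : Inv G φ (p :: ms) u m m o h s)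
    (hm : m + G.degree u = 9) (hm1 : 1 ≤ m) (hadj : G.Adj u q)
    (hmq : mq + G.degree q = 9) (hmq1 : 1 ≤ mq)
    (hJq : mq = Jq + 1 ∨ (1 ≤ h → 1 ≤ sq) ∧ mq = Jq)
    (hI : Inv G φ (p :: ms) q mq Jq oq hq sq) :
    ∃ φ' o' h' d a b, IsLColoring G L φ' ∧
      R G L φ φ' (fun t => if t = u then a else if t = q then b else 0) ∧
      (∀ t, t ≠ u → t ≠ q → φ' t = φ t) ∧ a + o' ≤ o ∧ b ≤ d ∧ h = h' + d ∧ d ≤ 1 ∧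
      Inv G φ' ms u m m o' h' s ∧
      (G.Adj u p.1 → φ' u ≠ p.2) ∧ Inv G φ' (p :: ms) q mq Jq oq hq (sq - d) := by
  have huq := hadj.ne
  by_cases hk : G.Adj u p.1 ∧ φ u = p.2
  · rcases Nat.eq_zero_or_pos h with rfl | hpos
    · obtain ⟨φ', o', a, h1, h2, h3, h4, h5, h6⟩ := step0 hL hφ hu hm hm1 (by omega)
      refine ⟨φ', o', 0, 0, a, 0, h1, h2.mono (fun t => by split_ifs <;> simp), fun t ht _ => h3 t ht,
        h4, le_rfl, rfl, by omega, h5, h6, ?_⟩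
      exact Inv_congr hI (h3 q huq.symm)
    · obtain ⟨h', rfl⟩ : ∃ h', h = h' + 1 := ⟨h - 1, by omega⟩
      obtain ⟨o', rfl, h1, h2⟩ := Inv_kill hu hk.1 hk.2
      obtain ⟨φ', p1, r1, q1, n1, f1, g1⟩ := moveB hL hφ u q hadj ((es G u ms).take m)
        ((es G q (p :: ms)).take (mq - 1)) (by
          have := List.length_take_le m (es G u ms)
          omega) (by
          have := List.length_take_le (mq - 1) (es G q (p :: ms))
          omega)
      refine ⟨φ', o', h', 1, 1, 1, p1, r1.mono ?_, q1, by omega, le_rfl, rfl, le_rfl,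
        ⟨m, le_rfl, f1, by omega, by omega⟩, fun _ => ?_, ?_⟩
      · intro t
        by_cases e : t = u
        · subst e; simp [ind, huq]
        · by_cases e' : t = q <;> simp [ind, e, e', huq.symm]
      · rw [← hk.2]; exact n1
      · obtain ⟨j, j1, j2, j3, j4⟩ := hI
        rcases g1 with g1 | g1
        · exact ⟨j, j1, by rw [g1]; exact j2, by omega, j4⟩
        · exact ⟨mq - 1, by omega, g1, by omega, j4⟩
  · refine ⟨φ, o, h, 0, 0, 0, hφ, (R.refl G L φ).mono (by simp), fun _ _ _ => rfl, by omega, le_rfl,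
      rfl, by omega, Inv_pass hu, ?_, hI⟩
    intro ha hc; exact hk ⟨ha, hc⟩

/-- clear colour `c` from the neighbours of `u` in the list `l` -/
lemma clear (hL : ∀ u, (L u).card = 10) (u : V) (c : ℕ) (l : List V) :
    ∀ φ : V → ℕ, IsLColoring G L φ → (∀ t ∈ l, G.degree t ≤ 8) →
    ∃ φ', IsLColoring G L φ' ∧
      R G L φ φ' (fun t => ind (t ∈ l ∧ G.Adj u t ∧ φ t = c)) ∧
      (∀ t, ¬ (t ∈ l ∧ G.Adj u t ∧ φ t = c) → φ' t = φ t) ∧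
      (∀ t ∈ l, G.Adj u t → φ' t ≠ c) := by
  induction l with
  | nil =>
    intro φ hφ _
    exact ⟨φ, hφ, (R.refl G L φ).mono (by simp), fun _ _ => rfl, by simp⟩
  | cons a l ih =>
    intro φ hφ hd
    by_cases hk : G.Adj u a ∧ φ a = c
    · obtain ⟨φ1, p1, r1, o1, n1, -⟩ := moveA hL hφ a [] (by simpa using hd a (by simp))
      obtain ⟨φ2, p2, r2, o2, n2⟩ := ih φ1 p1 (fun t ht => hd t (by simp [ht]))
      have ha1 : φ1 a ≠ c := by rw [← hk.2]; exact n1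
      refine ⟨φ2, p2, (r1.trans r2).mono ?_, ?_, ?_⟩
      · intro t
        by_cases e : t = a
        · subst e; simp [ind, hk, ha1]
        · simp [ind, e, o1 t e]
      · intro t ht
        by_cases e : t = a
        · subst e; simp [hk] at ht
        · rw [o2 t (by rw [o1 t e]; simpa [e] using ht), o1 t e]
      · intro t ht hut
        by_cases htl : t ∈ l
        · exact n2 t htl hut
        · have e : t = a := by simpa [htl] using ht
          subst e
          rw [o2 t (by simp [htl])]; exact ha1
    · obtain ⟨φ2, p2, r2, o2, n2⟩ := ih φ hφ (fun t ht => hd t (by simp [ht]))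
      have hne : ∀ t, G.Adj u t ∧ φ t = c → t ≠ a := by
        rintro t h rfl; exact hk h
      refine ⟨φ2, p2, r2.mono ?_, ?_, ?_⟩
      · intro t
        unfold ind
        split_ifs with x1 x2
        · exact le_rfl
        · exact absurd ⟨List.mem_cons_of_mem _ x1.1, x1.2⟩ x2
        · omega
        · omega
      · intro t ht
        exact o2 t (fun h => ht ⟨List.mem_cons_of_mem _ h.1, h.2⟩)
      · intro t ht hut
        by_cases htl : t ∈ l
        · exact n2 t htl hut
        · have e : t = a := by simpa [htl] using ht
          subst e
          rw [o2 t (by simp [htl])]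
          exact fun h => hk ⟨hut, h⟩

/-- finalise `u` -/
lemma finalise (hL : ∀ u, (L u).card = 10) (β : V → ℕ) (hβ : IsLColoring G L β) (u : V)
    (l : List V) (φ : V → ℕ) (hφ : IsLColoring G L φ) (hd : ∀ t ∈ l, G.degree t ≤ 8)
    (hl : ∀ t, t ∉ u :: l → φ t = β t) :
    ∃ φ', IsLColoring G L φ' ∧
      R G L φ φ' (fun t => ind (t = u) + ind (t ∈ l ∧ G.Adj u t ∧ φ t = β u)) ∧
      (∀ t, t ∉ l → φ' t = β t) ∧
      (∀ t, t ≠ u → φ t ≠ β u → φ' t = φ t) := by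
  obtain ⟨φ1, p1, r1, o1, n1⟩ := clear hL u (β u) l φ hφ hd
  have hn : ∀ t, G.Adj u t → φ1 t ≠ β u := by
    intro t ht
    by_cases h : t ∈ l
    · exact n1 t h ht
    · rw [o1 t (fun x => h x.1), hl t (by simp [h, ht.ne'])]
      exact (hβ.2 ht).symm
  by_cases e : φ1 u = β u
  · refine ⟨φ1, p1, r1.mono (fun t => by omega), ?_, ?_⟩
    · intro t ht
      by_cases h : t = u
      · subst h; exact e
      · rw [o1 t (fun x => ht x.1), hl t (by simp [h, ht])]
    · intro t _ ht; exact o1 t (fun x => ht x.2.2)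
  · refine ⟨Function.update φ1 u (β u), update_proper p1 u _ (hβ.1 u) hn,
      (r1.trans (R.single u (β u) (hβ.1 u) e hn)).mono (fun t => by omega), ?_, ?_⟩
    · intro t ht
      by_cases h : t = u
      · subst h; simp
      · simp only [Function.update_of_ne h]
        rw [o1 t (fun x => ht x.1), hl t (by simp [h, ht])]
    · intro t h ht; simp only [Function.update_of_ne h]; exact o1 t (fun x => ht x.2.2)

lemma ind_le (P : Prop) [Decidable P] : ind P ≤ 1 := by unfold ind; split_ifs <;> simp

lemma ind_zero {P : Prop} [Decidable P] (h : ¬ P) : ind P = 0 := by simp [ind, h]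

lemma ind_mono {P Q : Prop} [Decidable P] [Decidable Q] (h : P → Q) : ind P ≤ ind Q := by
  unfold ind; split_ifs <;> simp_all

lemma finalTail (hL : ∀ u, (L u).card = 10) (β : V → ℕ) (hβ : IsLColoring G L β) (a b z : V)
    (hab : a ≠ b) (haz : a ≠ z) (hbz : b ≠ z)
    (hda : G.degree b ≤ 8) (hdz : G.degree z ≤ 8)
    (φ : V → ℕ) (hφ : IsLColoring G L φ) (hl : ∀ t, t ∉ [a, b, z] → φ t = β t) :
    ∃ n, R G L φ β n ∧ n a ≤ 1 ∧ n b ≤ 2 ∧ n z ≤ 3 ∧ ∀ t, t ∉ [a, b, z] → n t = 0 := by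
  obtain ⟨φ1, p1, r1, o1, -⟩ := finalise hL β hβ a [b, z] φ hφ (by simp [hda, hdz]) hl
  obtain ⟨φ2, p2, r2, o2, -⟩ := finalise hL β hβ b [z] φ1 p1 (by simp [hdz]) o1
  obtain ⟨φ3, p3, r3, o3, -⟩ := finalise hL β hβ z [] φ2 p2 (by simp) o2
  have : φ3 = β := funext fun t => o3 t (by simp)
  subst this
  refine ⟨_, (r1.trans r2).trans r3, ?_, ?_, ?_, ?_⟩
  · simp [ind, hab, haz]
  · simp only [ind]; simp [hab.symm, hbz]; split_ifs <;> simp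
  · simp only [ind]; simp [hbz.symm, haz.symm]; split_ifs <;> simp
  · intro t ht
    simp at ht
    simp [ind, ht]

lemma final (hL : ∀ u, (L u).card = 10) (β : V → ℕ) (hβ : IsLColoring G L β) (v w x y z : V)
    (hnodup : ([v, w, x, y, z] : List V).Nodup) (e4 : G.Adj x y)
    (dz : G.degree z = 5)
    (dw : G.degree w = 6) (dx : G.degree x = 6) (dy : G.degree y = 6)
    (φ : V → ℕ) (hφ : IsLColoring G L φ) (hl : ∀ t, t ∉ [v, w, x, y, z] → φ t = β t) :
    ∃ n, R G L φ β n ∧ n v ≤ 1 ∧ n w ≤ 2 ∧ n x ≤ 2 + ind (G.Adj v x) ∧ n y ≤ 2 + ind (G.Adj v y) ∧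
      n z ≤ 3 + ind (G.Adj v z) + ind (G.Adj w z) ∧ ∀ t, t ∉ [v, w, x, y, z] → n t = 0 := by
  simp only [List.nodup_cons, List.mem_cons, not_or, List.not_mem_nil, not_false_eq_true,
    List.nodup_nil, and_true] at hnodup
  obtain ⟨⟨hvw, hvx, hvy, hvz⟩, ⟨hwx, hwy, hwz⟩, ⟨hxy, hxz⟩, hyz⟩ := hnodup
  obtain ⟨φ1, p1, r1, o1, -⟩ := finalise hL β hβ v [w, x, y, z] φ hφ (by simp [dw, dx, dy, dz]) hl
  obtain ⟨φ2, p2, r2, o2, -⟩ := finalise hL β hβ w [x, y, z] φ1 p1 (by simp [dx, dy, dz]) o1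
  have h12 := r1.trans r2
  have key : ∃ n, R G L φ2 β n ∧ n x + ind (φ1 x = β w) ≤ 2 ∧ n y + ind (φ1 y = β w) ≤ 2 ∧
      n z ≤ 3 ∧ ∀ t, t ∉ [x, y, z] → n t = 0 := by
    by_cases h : φ1 y = β w
    · have hx : φ1 x ≠ β w := by rw [← h]; exact p1.2 e4
      obtain ⟨n, s1, s2, s3, s4, s5⟩ := finalTail hL β hβ y x z (Ne.symm hxy) hyz hxz (by omega)
        (by omega) φ2 p2 (fun t ht => o2 t (by simp at ht ⊢; tauto))
      refine ⟨n, s1, ?_, ?_, s4, fun t ht => s5 t (by simp at ht ⊢; tauto)⟩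
      · rw [ind_zero hx]; omega
      · have := ind_le (φ1 y = β w); omega
    · obtain ⟨n, s1, s2, s3, s4, s5⟩ := finalTail hL β hβ x y z hxy hxz hyz (by omega)
        (by omega) φ2 p2 o2
      refine ⟨n, s1, ?_, ?_, s4, fun t ht => s5 t (by simp at ht ⊢; tauto)⟩
      · have := ind_le (φ1 x = β w); omega
      · rw [ind_zero h]; omega
  obtain ⟨n, s1, s2, s3, s4, s5⟩ := key
  refine ⟨_, h12.trans s1, ?_, ?_, ?_, ?_, ?_, ?_⟩
  · rw [s5 v (by simp; tauto)]
    simp [ind, hvw, hvx, hvy, hvz]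
  · rw [s5 w (by simp; tauto)]
    have h1 := ind_le (w ∈ [w, x, y, z] ∧ G.Adj v w ∧ φ w = β v)
    rw [ind_zero (Ne.symm hvw), ind_zero (P := w ∈ [x, y, z] ∧ _) (by simp [hwx, hwy, hwz])]
    have h2 := ind_le (w = w)
    omega
  · rw [ind_zero (Ne.symm hvx), ind_zero (Ne.symm hwx)]
    have h1 : ind (x ∈ [w, x, y, z] ∧ G.Adj v x ∧ φ x = β v) ≤ ind (G.Adj v x) :=
      ind_mono (fun h => h.2.1)
    have h2 : ind (x ∈ [x, y, z] ∧ G.Adj w x ∧ φ1 x = β w) ≤ ind (φ1 x = β w) :=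
      ind_mono (fun h => h.2.2)
    omega
  · rw [ind_zero (Ne.symm hvy), ind_zero (Ne.symm hwy)]
    have h1 : ind (y ∈ [w, x, y, z] ∧ G.Adj v y ∧ φ y = β v) ≤ ind (G.Adj v y) :=
      ind_mono (fun h => h.2.1)
    have h2 : ind (y ∈ [x, y, z] ∧ G.Adj w y ∧ φ1 y = β w) ≤ ind (φ1 y = β w) :=
      ind_mono (fun h => h.2.2)
    omega
  · rw [ind_zero (Ne.symm hvz), ind_zero (Ne.symm hwz)]
    have h1 : ind (z ∈ [w, x, y, z] ∧ G.Adj v z ∧ φ z = β v) ≤ ind (G.Adj v z) :=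
      ind_mono (fun h => h.2.1)
    have h2 : ind (z ∈ [x, y, z] ∧ G.Adj w z ∧ φ1 z = β w) ≤ ind (G.Adj w z) :=
      ind_mono (fun h => h.2.1)
    omega
  · intro t ht
    rw [s5 t (by simp at ht ⊢; tauto)]
    simp at ht
    simp [ind, ht]

lemma main (hL : ∀ u, (L u).card = 10) (β : V → ℕ) (v w x y z : V)
    (hnodup : ([v, w, x, y, z] : List V).Nodup)
    (e1 : G.Adj v w) (e2 : G.Adj w x) (e3 : G.Adj w y)
    (e5 : G.Adj x z) (e6 : G.Adj y z)
    (dv : G.degree v = 5) (dz : G.degree z = 5)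
    (dw : G.degree w = 6) (dx : G.degree x = 6) (dy : G.degree y = 6)
    (S : Set V) (hS : ∀ t, t ∈ S ↔ t ∈ [v, w, x, y, z]) (fx fy fz : ℕ)
    (F : ∀ φ : V → ℕ, IsLColoring G L φ → (∀ t, t ∉ S → φ t = β t) →
      ∃ n, R G L φ β n ∧ n v ≤ 1 ∧ n w ≤ 2 ∧ n x ≤ fx ∧ n y ≤ fy ∧ n z ≤ fz ∧
        ∀ t, t ∉ S → n t = 0) (ms : List (V × ℕ)) :
    ∀ (φ : V → ℕ) (ov ow ox oy oz hv gx gy hx hy : ℕ), IsLColoring G L φ →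
      OValid G L S φ ms → (∀ t, t ∉ S → run φ ms t = β t) →
      Inv G φ ms v 4 4 ov hv 0 → Inv G φ ms w 3 3 ow (gx + gy) hv →
      Inv G φ ms x 3 3 ox hx gx → Inv G φ ms y 3 3 oy hy gy → Inv G φ ms z 4 3 oz 0 0 →
      ∃ n, R G L φ β n ∧ n v ≤ ov + 1 ∧ n w ≤ ow + hv + 2 ∧ n x ≤ ox + gx + fx ∧
        n y ≤ oy + gy + fy ∧ n z ≤ oz + hx + hy + fz ∧ ∀ t, t ∉ S → n t ≤ cnt t ms := by
  have hnd := hnodup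
  simp only [List.nodup_cons, List.mem_cons, not_or, List.not_mem_nil, not_false_eq_true,
    List.nodup_nil, and_true] at hnd
  obtain ⟨⟨hvw, hvx, hvy, hvz⟩, ⟨hwx, hwy, hwz⟩, ⟨hxy, hxz⟩, hyz⟩ := hnd
  induction ms with
  | nil =>
    intro φ ov ow ox oy oz hv gx gy hx hy hφ _ hrun _ _ _ _ _
    obtain ⟨n, n1, n2, n3, n4, n5, n6, n7⟩ := F φ hφ hrun
    exact ⟨n, n1, by omega, by omega, by omega, by omega, by omega, fun t ht => by rw [n7 t ht]; omega⟩
  | cons p ms ih =>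
    intro φ ov ow ox oy oz hv gx gy hx hy hφ hval hrun Iv Iw Ix Iy Iz
    -- step v
    obtain ⟨φ1, ov', hv', d1, a1, b1, p1, r1, q1, c1, c1', c1'', c1d, Iv1, k1, Iw1⟩ :=
      step1 hL hφ Iv (by omega) (by omega) e1 (by omega) (by omega) (Or.inr ⟨id, rfl⟩) Iw
    have hd1 : hv - d1 = hv' := by omega
    rw [hd1] at Iw1
    have Ix1 := Inv_congr Ix (q1 x (Ne.symm hvx) (Ne.symm hwx))
    have Iy1 := Inv_congr Iy (q1 y (Ne.symm hvy) (Ne.symm hwy))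
    have Iz1 := Inv_congr Iz (q1 z (Ne.symm hvz) (Ne.symm hwz))
    -- step w
    have hw : ∃ φ2 ow' gx' gy' a b c, IsLColoring G L φ2 ∧
        R G L φ1 φ2 (fun t => if t = w then a else if t = x then b else if t = y then c else 0) ∧
        (∀ t, t ≠ w → t ≠ x → t ≠ y → φ2 t = φ1 t) ∧ a + ow' ≤ ow ∧ b + gx' ≤ gx ∧ c + gy' ≤ gy ∧
        Inv G φ2 ms w 3 3 ow' (gx' + gy') hv' ∧ (G.Adj w p.1 → φ2 w ≠ p.2) ∧
        Inv G φ2 (p :: ms) x 3 3 ox hx gx' ∧ Inv G φ2 (p :: ms) y 3 3 oy hy gy' := by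
      rcases Nat.eq_zero_or_pos gx with h0 | hpos
      · subst h0
        obtain ⟨φ2, ow', hw', d2, a2, b2, p2, r2, q2, c2, c2', c2'', c2d, Iw2, k2, Iy2⟩ :=
          step1 hL p1 Iw1 (by omega) (by omega) e3 (by omega) (by omega)
            (Or.inr ⟨fun h => by omega, rfl⟩) Iy1
        refine ⟨φ2, ow', 0, gy - d2, a2, 0, b2, p2, r2.mono ?_, fun t ht _ ht' => q2 t ht ht', c2,
          by omega, by omega, ?_, k2, Inv_congr Ix1 (q2 x (Ne.symm hwx) hxy), Iy2⟩
        · intro t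
          by_cases ha : t = w
          · simp [ha]
          · by_cases hb : t = x
            · subst hb; simp [ha, hxy]
            · simp [ha, hb]
        · have : 0 + (gy - d2) = hw' := by omega
          rw [this]; exact Iw2
      · obtain ⟨φ2, ow', hw', d2, a2, b2, p2, r2, q2, c2, c2', c2'', c2d, Iw2, k2, Ix2⟩ :=
          step1 hL p1 Iw1 (by omega) (by omega) e2 (by omega) (by omega)
            (Or.inr ⟨fun h => by omega, rfl⟩) Ix1
        refine ⟨φ2, ow', gx - d2, gy, a2, b2, 0, p2, r2.mono ?_, fun t ht ht' _ => q2 t ht ht', c2,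
          by omega, by omega, ?_, k2, Ix2, Inv_congr Iy1 (q2 y (Ne.symm hwy) (Ne.symm hxy))⟩
        · intro t
          by_cases ha : t = w
          · simp [ha]
          · by_cases hb : t = x
            · subst hb; simp [ha]
            · simp [ha, hb]
        · have : (gx - d2) + gy = hw' := by omega
          rw [this]; exact Iw2
    obtain ⟨φ2, ow', gx', gy', a2, b2, b2', p2, r2, q2, c2, c2', c2'', Iw2, k2, Ix2, Iy2⟩ := hw
    have Iv2 := Inv_congr Iv1 (q2 v hvw hvx hvy)
    have Iz2 := Inv_congr Iz1 (q2 z (Ne.symm hwz) (Ne.symm hxz) (Ne.symm hyz))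
    -- step x
    obtain ⟨φ3, ox', hx', d3, a3, b3, p3, r3, q3, c3, c3', c3'', c3d, Ix3, k3, Iz3⟩ :=
      step1 hL p2 Ix2 (by omega) (by omega) e5 (by omega) (by omega) (Or.inl rfl) Iz2
    rw [Nat.zero_sub] at Iz3
    have Iv3 := Inv_congr Iv2 (q3 v hvx hvz)
    have Iw3 := Inv_congr Iw2 (q3 w hwx hwz)
    have Iy3 := Inv_congr Iy2 (q3 y (Ne.symm hxy) hyz)
    -- step y
    obtain ⟨φ4, oy', hy', d4, a4, b4, p4, r4, q4, c4, c4', c4'', c4d, Iy4, k4, Iz4⟩ :=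
      step1 hL p3 Iy3 (by omega) (by omega) e6 (by omega) (by omega) (Or.inl rfl) Iz3
    rw [Nat.zero_sub] at Iz4
    have Iv4 := Inv_congr Iv3 (q4 v hvy hvz)
    have Iw4 := Inv_congr Iw3 (q4 w hwy hwz)
    have Ix4 := Inv_congr Ix3 (q4 x hxy hxz)
    -- step z
    obtain ⟨φ5, oz', a5, p5, r5, q5, c5, Iz5, k5⟩ :=
      step0 hL p4 Iz4 (by omega) (by omega) (by omega)
    have ev : φ5 v = φ1 v := by rw [q5 v hvz, q4 v hvy hvz, q3 v hvx hvz, q2 v hvw hvx hvy]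
    have ew : φ5 w = φ2 w := by rw [q5 w hwz, q4 w hwy hwz, q3 w hwx hwz]
    have ex : φ5 x = φ3 x := by rw [q5 x hxz, q4 x hxy hxz]
    have ey : φ5 y = φ4 y := q5 y hyz
    obtain ⟨v1, v2, v3, v4, v5⟩ := hval
    have out : ∀ t, t ∉ S → φ5 t = φ t := by
      intro t ht
      rw [hS] at ht
      simp only [List.mem_cons, List.not_mem_nil, or_false, not_or] at ht
      obtain ⟨t1, t2, t3, t4, t5⟩ := ht
      rw [q5 t t5, q4 t t4 t5, q3 t t3 t5, q2 t t2 t3 t4, q1 t t1 t2]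
    have clr : ∀ t, G.Adj p.1 t → φ5 t ≠ p.2 := by
      intro t ht
      by_cases hts : t ∈ S
      · rw [hS] at hts
        simp only [List.mem_cons, List.not_mem_nil, or_false] at hts
        rcases hts with rfl | rfl | rfl | rfl | rfl
        · rw [ev]; exact k1 ht.symm
        · rw [ew]; exact k2 ht.symm
        · rw [ex]; exact k3 ht.symm
        · rw [ey]; exact k4 ht.symm
        · exact k5 ht.symm
      · rw [out t hts]; exact v4 t ht hts
    have r6 := R.single (G := G) p.1 p.2 v2 (by rw [out _ v1]; exact v3) clr
    have p6 := update_proper p5 p.1 p.2 v2 clr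
    have agree : ∀ t, t ∉ S → Function.update φ p.1 p.2 t = Function.update φ5 p.1 p.2 t := by
      intro t ht
      by_cases e : t = p.1
      · subst e; simp
      · simp [e, out t ht]
    have ne : ∀ t, t ∈ S → t ≠ p.1 := by rintro t ht rfl; exact v1 ht
    have nv : v ≠ p.1 := ne v (by simp [hS])
    have nw : w ≠ p.1 := ne w (by simp [hS])
    have nx : x ≠ p.1 := ne x (by simp [hS])
    have ny : y ≠ p.1 := ne y (by simp [hS])
    have nz : z ≠ p.1 := ne z (by simp [hS])
    obtain ⟨n, n1, n2, n3, n4, n5, n6, n7⟩ := ih (Function.update φ5 p.1 p.2) ov' ow' ox' oy' oz' hv'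
      gx' gy' hx' hy' p6 (OValid_congr _ _ _ agree v5)
      (fun t ht => by rw [← run_congr _ _ ms agree t ht]; exact hrun t ht)
      (Inv_congr (Inv_congr Iv4 (q5 v hvz)) (by simp [nv]))
      (Inv_congr (Inv_congr Iw4 (q5 w hwz)) (by simp [nw]))
      (Inv_congr (Inv_congr Ix4 (q5 x hxz)) (by simp [nx]))
      (Inv_congr (Inv_congr Iy4 (q5 y hyz)) (by simp [ny]))
      (Inv_congr Iz5 (by simp [nz]))
    refine ⟨_, (((((r1.trans r2).trans r3).trans r4).trans r5).trans r6).trans n1, ?_, ?_, ?_, ?_, ?_, ?_⟩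
    · simp [ind, hvw, hvx, hvy, hvz, nv]; omega
    · simp [ind, hwx, hwy, hwz, Ne.symm hvw, nw]; omega
    · simp [ind, hxy, hxz, Ne.symm hvx, Ne.symm hwx, nx]; omega
    · simp [ind, hyz, Ne.symm hvy, Ne.symm hwy, Ne.symm hxy, ny]; omega
    · simp [ind, Ne.symm hvz, Ne.symm hwz, Ne.symm hxz, Ne.symm hyz, nz]; omega
    · intro t ht
      have h7 := n7 t ht
      rw [hS] at ht
      simp only [List.mem_cons, List.not_mem_nil, or_false, not_or] at ht
      obtain ⟨t1, t2, t3, t4, t5⟩ := ht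
      rw [cnt_cons]
      simp only [t1, t2, t3, t4, t5, if_false, ind, eq_comm (a := p.1)]
      omega

lemma es_length (S : Set V) (u : V) (ms : List (V × ℕ)) :
    ∀ φ, OValid G L S φ ms → ∀ N : Finset V, (∀ t, G.Adj u t → t ∉ S → t ∈ N) →
      (es G u ms).length ≤ ∑ t ∈ N, cnt t ms := by
  induction ms with
  | nil => intro φ _ N _; simp [es]
  | cons p ms ih =>
    rintro φ ⟨v1, v2, v3, v4, v5⟩ N hN
    have := ih _ v5 N hN
    simp only [cnt_cons, Finset.sum_add_distrib, es]
    split_ifs with ha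
    · have : p.1 ∈ N := hN _ ha v1
      rw [Finset.sum_ite_eq, if_pos this]
      simp; omega
    · omega

lemma es_bound (S : Set V) (u : V) (ms : List (V × ℕ)) (φ) (hv : OValid G L S φ ms) (k : ℕ)
    (hk : ∀ t, t ∉ S → cnt t ms ≤ k) (I : Finset V) (hI : ∀ t ∈ I, t ∈ S ∧ G.Adj u t) :
    (es G u ms).length ≤ (G.degree u - I.card) * k := by
  classical
  have h1 := es_length (G := G) (L := L) S u ms φ hv ((G.neighborFinset u).filter (· ∉ S))
    (by intro t ht hs; simp [ht, hs])
  refine h1.trans ?_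
  calc _ ≤ ((G.neighborFinset u).filter (· ∉ S)).card • k :=
        Finset.sum_le_card_nsmul _ _ _ (fun t ht => hk t (by simp at ht; exact ht.2))
    _ ≤ _ := by
      rw [smul_eq_mul]
      apply Nat.mul_le_mul_right
      have hd : Disjoint ((G.neighborFinset u).filter (· ∉ S)) I := by
        rw [Finset.disjoint_left]
        intro t ht hi
        simp at ht
        exact ht.2 (hI t hi).1
      have h2 : ((G.neighborFinset u).filter (· ∉ S) ∪ I).card ≤ (G.neighborFinset u).card := by
        apply Finset.card_le_card
        intro t ht
        simp only [Finset.mem_union, Finset.mem_filter, SimpleGraph.mem_neighborFinset] at ht ⊢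
        rcases ht with h | h
        · exact h.1
        · exact (hI t h).2
      rw [Finset.card_union_of_disjoint hd, SimpleGraph.card_neighborFinset_eq_degree] at h2
      omega

end Recol

/-- the configuration of Figure 2 (a 5-vertex path-like gadget with
degrees 5,6,6,6,5) is reducible: a `k`-good recoloring sequence in `G − S`
extends to a `k`-good recoloring sequence in `G`, for `k ≥ 416`. -/
theorem stmt_4 {V : Type} [Fintype V] [DecidableEq V]
    (G : SimpleGraph V) [DecidableRel G.Adj]
    (k : ℕ) (hk : 416 ≤ k)
    (L : V → Finset ℕ) (hL : ∀ u, (L u).card = 10)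
    (α β : V → ℕ) (hα : IsLColoring G L α) (hβ : IsLColoring G L β)
    (v w x y z : V) (hnodup : ([v, w, x, y, z] : List V).Nodup)
    (e1 : G.Adj v w) (e2 : G.Adj w x) (e3 : G.Adj w y) (e4 : G.Adj x y)
    (e5 : G.Adj x z) (e6 : G.Adj y z)
    (dv : G.degree v = 5) (dz : G.degree z = 5)
    (dw : G.degree w = 6) (dx : G.degree x = 6) (dy : G.degree y = 6)
    (S : Set V) (hS : S = {v, w, x, y, z})
    (hrec : ∃ (m : ℕ) (φ : Fin (m + 1) → ↥(Sᶜ) → ℕ),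
      IsRecolSeq (G.induce Sᶜ) (fun u => L u.1) φ (fun u => α u.1) (fun u => β u.1) ∧
      ∀ u : ↥(Sᶜ), recolorCount φ u ≤ k) :
    ∃ (M : ℕ) (ψ : Fin (M + 1) → V → ℕ),
      IsRecolSeq G L ψ α β ∧ ∀ u : V, recolorCount ψ u ≤ k := by
  have hSm : ∀ t, t ∈ S ↔ t ∈ [v, w, x, y, z] := by intro t; rw [hS]; simp
  obtain ⟨m, φ, hφ, hc⟩ := hrec
  obtain ⟨ms, hms, hrun, hcnt⟩ := Recol.toList m α β φ hφ
  have hk' : ∀ t, t ∉ S → Recol.cnt t ms ≤ k := fun t ht => by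
    rw [hcnt t ht]; exact hc _
  have hnd := hnodup
  simp only [List.nodup_cons, List.mem_cons, not_or, List.not_mem_nil, not_false_eq_true,
    List.nodup_nil, and_true] at hnd
  obtain ⟨⟨hvw, hvx, hvy, hvz⟩, ⟨hwx, hwy, hwz⟩, ⟨hxy, hxz⟩, hyz⟩ := hnd
  have lv : (Recol.es G v ms).length ≤ 4 * k := by
    have := Recol.es_bound S v ms α hms k hk' {w} (by simp [hSm, e1])
    rwa [dv] at this
  have lw : (Recol.es G w ms).length ≤ 3 * k := by
    have := Recol.es_bound S w ms α hms k hk' {v, x, y} (by simp [hSm, e1.symm, e2, e3])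
    rwa [dw, Finset.card_eq_three.2 ⟨v, x, y, hvx, hvy, hxy, rfl⟩] at this
  have lx : (Recol.es G x ms).length + Recol.ind (G.Adj v x) * k ≤ 3 * k := by
    by_cases h : G.Adj v x
    · have := Recol.es_bound S x ms α hms k hk' {v, w, y, z}
        (by simp [hSm, e2.symm, e4, e5, h.symm])
      have hcard : ({v, w, y, z} : Finset V).card = 4 := by
        simp [hvw, hvy, hvz, hwy, hwz, hyz]
      rw [dx, hcard] at this
      simp only [Recol.ind, h, if_true]; omega
    · have := Recol.es_bound S x ms α hms k hk' {w, y, z} (by simp [hSm, e2.symm, e4, e5])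
      rw [dx, Finset.card_eq_three.2 ⟨w, y, z, hwy, hwz, hyz, rfl⟩] at this
      simp only [Recol.ind, h, if_false]; omega
  have ly : (Recol.es G y ms).length + Recol.ind (G.Adj v y) * k ≤ 3 * k := by
    by_cases h : G.Adj v y
    · have := Recol.es_bound S y ms α hms k hk' {v, w, x, z}
        (by simp [hSm, e3.symm, e4.symm, e6, h.symm])
      have hcard : ({v, w, x, z} : Finset V).card = 4 := by
        simp [hvw, hvx, hvz, hwx, hwz, hxz]
      rw [dy, hcard] at this
      simp only [Recol.ind, h, if_true]; omega
    · have := Recol.es_bound S y ms α hms k hk' {w, x, z} (by simp [hSm, e3.symm, e4.symm, e6])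
      rw [dy, Finset.card_eq_three.2 ⟨w, x, z, hwx, hwz, hxz, rfl⟩] at this
      simp only [Recol.ind, h, if_false]; omega
  have lz : (Recol.es G z ms).length + (Recol.ind (G.Adj v z) + Recol.ind (G.Adj w z)) * k
      ≤ 3 * k := by
    by_cases h : G.Adj v z
    · by_cases h' : G.Adj w z
      · have := Recol.es_bound S z ms α hms k hk' {v, w, x, y}
          (by simp [hSm, e5.symm, e6.symm, h.symm, h'.symm])
        have hcard : ({v, w, x, y} : Finset V).card = 4 := by
          simp [hvw, hvx, hvy, hwx, hwy, hxy]
        rw [dz, hcard] at this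
        simp only [Recol.ind, h, h', if_true]; omega
      · have := Recol.es_bound S z ms α hms k hk' {v, x, y}
          (by simp [hSm, e5.symm, e6.symm, h.symm])
        rw [dz, Finset.card_eq_three.2 ⟨v, x, y, hvx, hvy, hxy, rfl⟩] at this
        simp only [Recol.ind, h, h', if_true, if_false]; omega
    · by_cases h' : G.Adj w z
      · have := Recol.es_bound S z ms α hms k hk' {w, x, y}
          (by simp [hSm, e5.symm, e6.symm, h'.symm])
        rw [dz, Finset.card_eq_three.2 ⟨w, x, y, hwx, hwy, hxy, rfl⟩] at this
        simp only [Recol.ind, h, h', if_true, if_false]; omega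
      · have := Recol.es_bound S z ms α hms k hk' {x, y}
          (by simp [hSm, e5.symm, e6.symm])
        rw [dz, Finset.card_pair hxy] at this
        simp only [Recol.ind, h, h', if_false]; omega
  have cases_ind : ∀ (P : Prop) [Decidable P], Recol.ind P = 0 ∨ Recol.ind P = 1 := by
    intro P _; unfold Recol.ind; split_ifs <;> simp
  obtain ⟨n, n1, n2, n3, n4, n5, n6, n7⟩ := Recol.main hL β v w x y z hnodup e1 e2 e3 e5 e6 dv dz
    dw dx dy S hSm (2 + Recol.ind (G.Adj v x)) (2 + Recol.ind (G.Adj v y))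
    (3 + Recol.ind (G.Adj v z) + Recol.ind (G.Adj w z))
    (fun ψ hψ h => by
      obtain ⟨n, h1, h2, h3, h4, h5, h6, h7⟩ := Recol.final hL β hβ v w x y z hnodup e4 dz dw dx dy
        ψ hψ (fun t ht => h t (fun hs => ht ((hSm t).1 hs)))
      exact ⟨n, h1, h2, h3, h4, h5, h6, fun t ht => h7 t (fun hs => ht ((hSm t).2 hs))⟩)
    ms α (k - 1) (k - 6) (k - 13 - Recol.ind (G.Adj v x)) (k - 13 - Recol.ind (G.Adj v y))
    (k - 103 - Recol.ind (G.Adj v z) - Recol.ind (G.Adj w z)) 4 11 11 50 50 hα hms hrun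
    ⟨0, by omega, by simp, by omega, by omega⟩
    ⟨0, by omega, by simp, by omega, by omega⟩
    ⟨0, by omega, by simp, by
      rcases cases_ind (G.Adj v x) with h | h <;> rw [h] at lx ⊢ <;> omega, by
      have := Recol.ind_le (G.Adj v x); omega⟩
    ⟨0, by omega, by simp, by
      rcases cases_ind (G.Adj v y) with h | h <;> rw [h] at ly ⊢ <;> omega, by
      have := Recol.ind_le (G.Adj v y); omega⟩
    ⟨0, by omega, by simp, by
      rcases cases_ind (G.Adj v z) with h | h <;> rcases cases_ind (G.Adj w z) with h' | h' <;>
        rw [h, h'] at lz ⊢ <;> omega, by omega⟩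
  obtain ⟨ms', o1, o2, o3⟩ := n1
  obtain ⟨M, ψ, hψ, hcψ⟩ := Recol.ofList ms' α hα o1
  rw [o2] at hψ
  refine ⟨M, ψ, hψ, fun u => ?_⟩
  rw [hcψ]
  refine (o3 u).trans ?_
  have i1 := Recol.ind_le (G.Adj v x)
  have i2 := Recol.ind_le (G.Adj v y)
  have i3 := Recol.ind_le (G.Adj v z)
  have i4 := Recol.ind_le (G.Adj w z)
  by_cases hu : u ∈ S
  · rw [hSm] at hu
    simp only [List.mem_cons, List.not_mem_nil, or_false] at hu
    rcases hu with rfl | rfl | rfl | rfl | rfl <;> omega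
  · exact (n7 u hu).trans (hk' u hu)
end

section
/- Fix an integer k ≥ 416. Let G be a finite simple graph, L a 10-assignment for G, and α, β two L-colorings of G. Suppose G contains four distinct vertices a, b, c, d with ab, bc, cd, ac, bd edges of G, d_G(a) = d_G(d) = 5, and d_G(b) = d_G(c) = 6. Let S = {a, b, c, d}. If there exists a k-good recoloring sequence in G − S from the restriction of α to G − S to the restriction of β to G − S, then there exists a k-good recoloring sequence in G from α to β. -/
open Function

inductive Reach_s7 {V : Type} [DecidableEq V] (G : SimpleGraph V) (L : V → Finset ℕ) (α : V → ℕ) :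
    (V → ℕ) → (V → ℕ) → Prop
  | refl : IsLColoring G L α → Reach_s7 G L α α (fun _ => 0)
  | step {φ n : V → ℕ} (v : V) (x : ℕ) : Reach_s7 G L α φ n → IsLColoring G L (update φ v x) →
      φ v ≠ x → Reach_s7 G L α (update φ v x) (update n v (n v + 1))

theorem recolorCount_eq_sum {V : Type} {m : ℕ} (φ : Fin (m + 1) → V → ℕ) (v : V) :
    recolorCount φ v = ∑ i : Fin m, if φ i.castSucc v ≠ φ i.succ v then 1 else 0 := by
  unfold recolorCount
  rw [Finset.card_filter]

theorem Reach_s7.col {V : Type} [DecidableEq V] {G : SimpleGraph V} {L : V → Finset ℕ}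
    {α φ n : V → ℕ} (h : Reach_s7 G L α φ n) : IsLColoring G L φ := by
  cases h <;> assumption

theorem Reach_s7.seq {V : Type} [DecidableEq V] {G : SimpleGraph V} {L : V → Finset ℕ}
    {α φ n : V → ℕ} (h : Reach_s7 G L α φ n) :
    ∃ (M : ℕ) (ψ : Fin (M + 1) → V → ℕ),
      IsRecolSeq G L ψ α φ ∧ ∀ u : V, recolorCount ψ u = n u := by
  induction h with
  | refl h =>
    refine ⟨0, fun _ => α, ⟨rfl, rfl, fun _ => h, fun i => i.elim0⟩, fun u => ?_⟩
    simp [recolorCount]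
  | @step φ n v x h hc hx ih =>
    obtain ⟨M, ψ, ⟨h0, h1, h2, h3⟩, h4⟩ := ih
    refine ⟨M + 1, Fin.snoc (α := fun _ => V → ℕ) ψ (update φ v x), ⟨?_, ?_, ?_, ?_⟩, ?_⟩
    · have : (0 : Fin (M + 1 + 1)) = Fin.castSucc (0 : Fin (M + 1)) := rfl
      rw [this, Fin.snoc_castSucc, h0]
    · rw [Fin.snoc_last]
    · intro i
      refine Fin.lastCases ?_ (fun j => ?_) i
      · rw [Fin.snoc_last]; exact hc
      · rw [Fin.snoc_castSucc]; exact h2 j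
    · intro i
      refine Fin.lastCases ?_ (fun j => ?_) i
      · rw [Fin.snoc_castSucc, Fin.succ_last, Fin.snoc_last, h1]
        refine ⟨v, by simpa using hx, ?_⟩
        intro u hu
        by_contra hne
        exact hu (by simp [update_of_ne hne])
      · rw [Fin.snoc_castSucc, Fin.succ_castSucc, Fin.snoc_castSucc]
        exact h3 j
    · intro u
      rw [recolorCount_eq_sum, Fin.sum_univ_castSucc]
      simp only [Fin.snoc_castSucc, Fin.succ_castSucc, Fin.succ_last, Fin.snoc_last, h1]
      rw [← recolorCount_eq_sum, h4]
      by_cases hu : u = v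
      · subst hu; simp [hx]
      · simp [update_of_ne hu]

/-- A valid list of recoloring moves outside `S`, ending in `β`. -/
def OutOK {V : Type} [DecidableEq V] (G : SimpleGraph V) (L : V → Finset ℕ) (S : Set V)
    (β : V → ℕ) : List (V × ℕ) → (V → ℕ) → Prop
  | [], φ => ∀ u, u ∉ S → φ u = β u
  | (w, x) :: ms, φ => w ∉ S ∧ x ∈ L w ∧ φ w ≠ x ∧ (∀ u, u ∉ S → G.Adj w u → φ u ≠ x) ∧
      OutOK G L S β ms (update φ w x)

theorem OutOK.congr {V : Type} [DecidableEq V] {G : SimpleGraph V} {L : V → Finset ℕ} {S : Set V}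
    {β : V → ℕ} {ms : List (V × ℕ)} : ∀ {φ φ' : V → ℕ}, OutOK G L S β ms φ →
      (∀ u, u ∉ S → φ' u = φ u) → OutOK G L S β ms φ' := by
  induction ms with
  | nil =>
    intro φ φ' h hh u hu
    rw [hh u hu, h u hu]
  | cons p ms ih =>
    obtain ⟨w, x⟩ := p
    intro φ φ' h hh
    obtain ⟨h1, h2, h3, h4, h5⟩ := h
    refine ⟨h1, h2, by rwa [hh w h1], fun u hu ha => by rw [hh u hu]; exact h4 u hu ha, ih h5 ?_⟩
    intro u hu
    by_cases huw : u = w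
    · subst huw; simp
    · simp [update_of_ne huw, hh u hu]

theorem OutOK.notMem {V : Type} [DecidableEq V] {G : SimpleGraph V} {L : V → Finset ℕ} {S : Set V}
    {β : V → ℕ} {ms : List (V × ℕ)} : ∀ {φ : V → ℕ}, OutOK G L S β ms φ →
      ∀ p ∈ ms, p.1 ∉ S := by
  induction ms with
  | nil => simp
  | cons p ms ih =>
    obtain ⟨w, x⟩ := p
    intro φ h
    obtain ⟨h1, h2, h3, h4, h5⟩ := h
    intro p hp
    rcases List.mem_cons.1 hp with rfl | hp
    · exact h1
    · exact ih h5 p hp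

theorem outOK_of_seq {V : Type} [DecidableEq V] (G : SimpleGraph V) (L : V → Finset ℕ) (S : Set V)
    (β : V → ℕ) : ∀ (m : ℕ) (φ : Fin (m + 1) → ↥(Sᶜ) → ℕ) (α : V → ℕ),
      (IsRecolSeq (G.induce Sᶜ) (fun u => L u.1) φ (fun u => α u.1) (fun u => β u.1)) →
      ∃ ms : List (V × ℕ), OutOK G L S β ms α ∧
        ∀ u : ↥(Sᶜ), (ms.map Prod.fst).count u.1 = recolorCount φ u := by
  intro m
  induction m with
  | zero =>
    intro φ α ⟨h0, h1, h2, h3⟩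
    refine ⟨[], ?_, ?_⟩
    · intro u hu
      have : φ 0 = φ (Fin.last 0) := rfl
      rw [h0, h1] at this
      exact congrFun this ⟨u, hu⟩
    · intro u; simp [recolorCount]
  | succ m ih =>
    intro φ α ⟨h0, h1, h2, h3⟩
    obtain ⟨w, hw, huniq⟩ := h3 0
    have hother : ∀ u : ↥(Sᶜ), u ≠ w → φ (Fin.succ 0) u = φ 0 u := by
      intro u hu
      by_contra hne
      exact hu (huniq u (fun h => hne h.symm))
    have hα : ∀ u : ↥(Sᶜ), φ 0 u = α u.1 := fun u => congrFun h0 u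
    obtain ⟨ms, hms, hc⟩ := ih (fun i => φ i.succ) (update α w.1 (φ (Fin.succ 0) w)) ⟨by
        funext u
        by_cases hu : u = w
        · subst hu; simp
        · have : u.1 ≠ w.1 := fun h => hu (Subtype.ext h)
          rw [update_of_ne this, ← hα]
          exact hother u hu, by
        rw [← h1]; rfl, fun i => h2 _, fun i => by
        have := h3 i.succ
        exact this⟩
    refine ⟨(w.1, φ (Fin.succ 0) w) :: ms, ⟨w.2, (h2 _).1 w, ?_, ?_, hms⟩, ?_⟩
    · rw [← hα]; exact hw
    · intro u hu ha
      have huw : (⟨u, hu⟩ : ↥(Sᶜ)) ≠ w := by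
        rintro rfl
        exact G.loopless.irrefl _ ha
      have e := hα ⟨u, hu⟩
      simp only at e
      rw [← e, ← hother _ huw]
      exact fun h => (h2 (Fin.succ 0)).2 (u := w) (w := ⟨u, hu⟩) ha h.symm
    · intro u
      rw [recolorCount_eq_sum, Fin.sum_univ_succ]
      have := hc u
      rw [recolorCount_eq_sum] at this
      rw [List.map_cons, List.count_cons, this, add_comm]
      have e : ((w.1, φ (Fin.succ 0) w).1 == u.1) = true ↔ φ (Fin.castSucc 0) u ≠ φ (Fin.succ 0) u := by
        rw [beq_iff_eq]
        constructor
        · intro h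
          have : w = u := Subtype.ext h
          subst this; exact hw
        · intro h
          rw [huniq u h]
      congr 1
      simp only [e]

/-- The colors that neighbors of `v` will receive. -/
def fut {V : Type} (G : SimpleGraph V) [DecidableRel G.Adj] (v : V) :
    List (V × ℕ) → List ℕ
  | [] => []
  | (w, x) :: ms => if G.Adj v w then x :: fut G v ms else fut G v ms

theorem fut_length {V : Type} [DecidableEq V] (G : SimpleGraph V) [DecidableRel G.Adj] (v : V)
    (R : Finset V) (ms : List (V × ℕ)) (h : ∀ p ∈ ms, G.Adj v p.1 → p.1 ∈ R) :
    (fut G v ms).length ≤ ∑ u ∈ R, (ms.map Prod.fst).count u := by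
  induction ms with
  | nil => simp [fut]
  | cons p ms ih =>
    obtain ⟨w, x⟩ := p
    have ih' := ih (fun p hp => h p (List.mem_cons_of_mem _ hp))
    simp only [List.map_cons, List.count_cons, Finset.sum_add_distrib, fut]
    split_ifs with hw
    · have hm : w ∈ R := h (w, x) List.mem_cons_self hw
      have : 1 ≤ ∑ u ∈ R, if (w == u) = true then 1 else 0 := by
        simp [hm]
      simp only [List.length_cons]
      omega
    · omega

theorem pick {V : Type} [DecidableEq V] {L : V → Finset ℕ} (hL : ∀ u, (L u).card = 10)
    (v : V) (φ : V → ℕ) (R : Finset V) (l : List ℕ) (h : R.card + l.length ≤ 9) :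
    ∃ y ∈ L v, (∀ u ∈ R, φ u ≠ y) ∧ y ∉ l := by
  have h1 : (R.image φ ∪ l.toFinset).card < (L v).card := by
    have := Finset.card_union_le (R.image φ) l.toFinset
    have h2 := Finset.card_image_le (s := R) (f := φ)
    have h3 := List.toFinset_card_le l
    rw [hL]; omega
  obtain ⟨y, hy, hy'⟩ := Finset.exists_mem_notMem_of_card_lt_card h1
  simp only [Finset.mem_union, Finset.mem_image, List.mem_toFinset, not_or, not_exists, not_and] at hy'
  exact ⟨y, hy, hy'.1, hy'.2⟩

theorem Reach_s7.move {V : Type} [DecidableEq V] {G : SimpleGraph V} {L : V → Finset ℕ}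
    {α φ n : V → ℕ} (h : Reach_s7 G L α φ n) {v : V} {y : ℕ} (hy : y ∈ L v) (hne : φ v ≠ y)
    (hn : ∀ u, G.Adj v u → φ u ≠ y) : Reach_s7 G L α (update φ v y) (update n v (n v + 1)) := by
  refine Reach_s7.step v y h ⟨?_, ?_⟩ hne
  · intro u
    by_cases hu : u = v
    · subst hu; simpa
    · rw [update_of_ne hu]; exact h.col.1 u
  · intro u w huw
    by_cases hu : u = v
    · subst hu
      rw [update_self, update_of_ne huw.ne.symm]
      exact (hn w huw).symm
    · by_cases hw : w = v
      · subst hw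
        rw [update_self, update_of_ne hu]
        exact hn u huw.symm
      · rw [update_of_ne hu, update_of_ne hw]
        exact h.col.2 huw

section main
variable {V : Type} [Fintype V] [DecidableEq V] (G : SimpleGraph V) [DecidableRel G.Adj]

theorem clear_col {L : V → Finset ℕ} (hL : ∀ u, (L u).card = 10) {α φ n : V → ℕ}
    (h : Reach_s7 G L α φ n) (x : ℕ) (W : Finset V) (hW : ∀ u ∈ W, G.degree u ≤ 6) :
    ∃ φ' n', Reach_s7 G L α φ' n' ∧ (∀ u, u ∉ W → φ' u = φ u ∧ n' u = n u) ∧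
      (∀ u, n' u ≤ n u + 1) ∧ ∀ u ∈ W, φ' u ≠ x := by
  induction W using Finset.induction_on with
  | empty => exact ⟨φ, n, h, fun u _ => ⟨rfl, rfl⟩, fun u => by omega, by simp⟩
  | insert v W hv ih =>
    obtain ⟨φ', n', h1, h2, h3, h4⟩ := ih (fun u hu => hW u (Finset.mem_insert_of_mem hu))
    by_cases hx : φ' v = x
    · have hd := hW v (Finset.mem_insert_self _ _)
      obtain ⟨y, hy, hy1, hy2⟩ := pick hL v φ' (G.neighborFinset v) [x] (by
        rw [G.card_neighborFinset_eq_degree]; simp; omega)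
      have hyx : y ≠ x := by simpa using hy2
      refine ⟨_, _, h1.move hy (by rw [hx]; exact hyx.symm) (fun u hu => hy1 u (by simpa using hu)),
        ?_, ?_, ?_⟩
      · intro u hu
        simp only [Finset.mem_insert, not_or] at hu
        rw [update_of_ne hu.1, update_of_ne hu.1]
        exact h2 u hu.2
      · intro u
        by_cases hu : u = v
        · subst hu
          rw [update_self, (h2 u hv).2]
        · rw [update_of_ne hu]; exact h3 u
      · intro u hu
        by_cases huv : u = v
        · subst huv; rwa [update_self]
        · rw [update_of_ne huv]
          exact h4 u (Finset.mem_of_mem_insert_of_ne hu huv)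
    · refine ⟨φ', n', h1, fun u hu => h2 u (fun h => hu (Finset.mem_insert_of_mem h)), h3, ?_⟩
      intro u hu
      rcases Finset.mem_insert.1 hu with rfl | hu
      · exact hx
      · exact h4 u hu

theorem finish {L : V → Finset ℕ} (hL : ∀ u, (L u).card = 10) {α β : V → ℕ}
    (hβ : IsLColoring G L β) (U : Finset V) (hU : ∀ u ∈ U, G.degree u ≤ 6) :
    ∀ {φ n : V → ℕ}, Reach_s7 G L α φ n → (∀ u, u ∉ U → φ u = β u) →
    ∃ n', Reach_s7 G L α β n' ∧ (∀ u, u ∉ U → n' u = n u) ∧ (∀ u, n' u ≤ n u + U.card) := by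
  induction U using Finset.induction_on with
  | empty =>
    intro φ n h hφ
    have : φ = β := funext fun u => hφ u (by simp)
    subst this
    exact ⟨n, h, fun _ _ => rfl, fun _ => by simp⟩
  | insert v W hv ih =>
    intro φ n h hφ
    have hW : ∀ u ∈ W, G.degree u ≤ 6 := fun u hu => hU u (Finset.mem_insert_of_mem hu)
    obtain ⟨φ1, n1, h1, h2, h3, h4⟩ := clear_col G hL h (β v) W hW
    have key : ∃ φ2 n2, Reach_s7 G L α φ2 n2 ∧ (∀ u, u ∉ W → φ2 u = β u) ∧
        (∀ u, u ∉ insert v W → n2 u = n u) ∧ ∀ u, n2 u ≤ n u + 1 := by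
      have hoff : ∀ u, u ∉ W → u ≠ v → φ1 u = β u := by
        intro u hu huv
        rw [(h2 u hu).1]
        exact hφ u (by simp [hu, huv])
      by_cases hx : φ1 v = β v
      · refine ⟨φ1, n1, h1, ?_, ?_, h3⟩
        · intro u hu
          by_cases huv : u = v
          · rw [huv, hx]
          · exact hoff u hu huv
        · intro u hu
          exact (h2 u (fun h => hu (Finset.mem_insert_of_mem h))).2
      · refine ⟨_, _, h1.move (hβ.1 v) hx ?_, ?_, ?_, ?_⟩
        · intro u hu
          by_cases huW : u ∈ W
          · exact h4 u huW
          · rw [hoff u huW hu.ne.symm]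
            exact (hβ.2 hu).symm
        · intro u hu
          by_cases huv : u = v
          · rw [huv, update_self]
          · rw [update_of_ne huv]; exact hoff u hu huv
        · intro u hu
          simp only [Finset.mem_insert, not_or] at hu
          rw [update_of_ne hu.1]; exact (h2 u hu.2).2
        · intro u
          by_cases huv : u = v
          · rw [huv, update_self, (h2 v hv).2]
          · rw [update_of_ne huv]; exact h3 u
    obtain ⟨φ2, n2, k1, k2, k3, k4⟩ := key
    obtain ⟨n', l1, l2, l3⟩ := ih hW k1 k2
    refine ⟨n', l1, ?_, ?_⟩
    · intro u hu
      rw [l2 u (fun h => hu (Finset.mem_insert_of_mem h)), k3 u hu]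
    · intro u
      rw [Finset.card_insert_of_notMem hv]
      have := l3 u
      have := k4 u
      omega

/-- Potential for a degree-5 vertex `a` whose partner is `b`. -/
def PA (k : ℕ) (a b : V) (φ n : V → ℕ) (ms : List (V × ℕ)) : Prop :=
  ∃ q ≤ 4, φ a ∉ (fut G a ms).take q ∧
    4 * n a + (fut G a ms).length ≤ 3 * k + q + 5 * (n b / 6)

/-- Potential for a degree-6 vertex `b`. -/
def PB (k : ℕ) (b : V) (φ n : V → ℕ) (ms : List (V × ℕ)) : Prop :=
  ∃ q ≤ 4, φ b ∉ (fut G b ms).take q ∧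
    3 * n b + n b / 6 + (fut G b ms).length ≤ 3 * k + q

theorem fixA {L : V → Finset ℕ} (hL : ∀ u, (L u).card = 10) {k : ℕ} {a b : V} (hab : G.Adj a b)
    (hda : G.degree a = 5) {α φ n : V → ℕ} {w : V} {x : ℕ} {ms : List (V × ℕ)}
    (hR : Reach_s7 G L α φ n) (hA : PA G k a b φ n ((w, x) :: ms)) :
    ∃ φ' n', Reach_s7 G L α φ' n' ∧ (∀ u, u ≠ a → φ' u = φ u ∧ n' u = n u) ∧
      PA G k a b φ' n' ((w, x) :: ms) ∧ (G.Adj a w → φ' a ≠ x) := by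
  by_cases hc : G.Adj a w ∧ φ a = x
  swap
  · exact ⟨φ, n, hR, fun _ _ => ⟨rfl, rfl⟩, hA, fun h h' => hc ⟨h, h'⟩⟩
  obtain ⟨hw, hx⟩ := hc
  obtain ⟨q, hq, hq1, hq2⟩ := hA
  have hf : fut G a ((w, x) :: ms) = x :: fut G a ms := by simp [fut, hw]
  have hq0 : q = 0 := by
    rcases q with _ | q
    · rfl
    · rw [hf, List.take_succ_cons] at hq1
      simp [hx] at hq1
  subst hq0
  obtain ⟨y, hy, hy1, hy2⟩ := pick hL a φ (G.neighborFinset a) ((fut G a ((w, x) :: ms)).take 4) (by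
    rw [G.card_neighborFinset_eq_degree, hda, List.length_take]; omega)
  have hyx : y ≠ x := by
    rintro rfl
    rw [hf, List.take_succ_cons] at hy2
    simp at hy2
  refine ⟨_, _, hR.move hy (by rw [hx]; exact hyx.symm) (fun u hu => hy1 u (by simpa using hu)),
    ?_, ⟨4, le_rfl, ?_, ?_⟩, ?_⟩
  · intro u hu
    simp [update_of_ne hu]
  · rwa [update_self]
  · rw [update_self, update_of_ne hab.ne.symm]
    omega
  · intro _; rwa [update_self]

theorem fixB {L : V → Finset ℕ} (hL : ∀ u, (L u).card = 10) {k : ℕ} {a b : V} (hab : G.Adj a b)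
    (hda : G.degree a = 5) (hdb : G.degree b = 6)
    {α φ n : V → ℕ} {w : V} {x : ℕ} {ms : List (V × ℕ)}
    (hR : Reach_s7 G L α φ n) (hA : PA G k a b φ n ((w, x) :: ms))
    (hB : PB G k b φ n ((w, x) :: ms)) :
    ∃ φ' n', Reach_s7 G L α φ' n' ∧ (∀ u, u ≠ a → u ≠ b → φ' u = φ u ∧ n' u = n u) ∧
      PA G k a b φ' n' ((w, x) :: ms) ∧ PB G k b φ' n' ((w, x) :: ms) ∧
      (G.Adj b w → φ' b ≠ x) := by
  by_cases hc : G.Adj b w ∧ φ b = x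
  swap
  · exact ⟨φ, n, hR, fun _ _ _ => ⟨rfl, rfl⟩, hA, hB, fun h h' => hc ⟨h, h'⟩⟩
  obtain ⟨hw, hx⟩ := hc
  have hne : a ≠ b := hab.ne
  obtain ⟨p, hp, hp1, hp2⟩ := hA
  obtain ⟨q, hq, hq1, hq2⟩ := hB
  have hf : fut G b ((w, x) :: ms) = x :: fut G b ms := by simp [fut, hw]
  have hq0 : q = 0 := by
    rcases q with _ | q
    · rfl
    · rw [hf, List.take_succ_cons] at hq1
      simp [hx] at hq1
  subst hq0
  by_cases h6 : (n b + 1) / 6 = n b / 6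
  · obtain ⟨y, hy, hy1, hy2⟩ := pick hL b φ (G.neighborFinset b)
      ((fut G b ((w, x) :: ms)).take 3) (by
        rw [G.card_neighborFinset_eq_degree, hdb, List.length_take]; omega)
    have hyx : y ≠ x := by
      rintro rfl
      rw [hf, List.take_succ_cons] at hy2
      simp at hy2
    refine ⟨_, _, hR.move hy (by rw [hx]; exact hyx.symm) (fun u hu => hy1 u (by simpa using hu)),
      ?_, ⟨p, hp, ?_, ?_⟩, ⟨3, by omega, ?_, ?_⟩, ?_⟩
    · intro u _ hu
      simp [update_of_ne hu]
    · rwa [update_of_ne hne]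
    · rw [update_self, update_of_ne hne]
      omega
    · rwa [update_self]
    · rw [update_self]; omega
    · intro _; rwa [update_self]
  · obtain ⟨y, hy, hy1, hy2⟩ := pick hL b φ ((G.neighborFinset b).erase a)
      ((fut G b ((w, x) :: ms)).take 4) (by
        rw [Finset.card_erase_of_mem (by simpa using hab.symm),
          G.card_neighborFinset_eq_degree, hdb, List.length_take]; omega)
    have hyx : y ≠ x := by
      rintro rfl
      rw [hf, List.take_succ_cons] at hy2
      simp at hy2
    by_cases hay : φ a = y
    · obtain ⟨z, hz, hz1, hz2⟩ := pick hL a φ (G.neighborFinset a)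
        (φ a :: (fut G a ((w, x) :: ms)).take 3) (by
          rw [G.card_neighborFinset_eq_degree, hda, List.length_cons, List.length_take]; omega)
      simp only [List.mem_cons, not_or] at hz2
      have hR1 := hR.move hz (fun h => hz2.1 h.symm) (fun u hu => hz1 u (by simpa using hu))
      refine ⟨_, _, hR1.move (v := b) hy ?_ ?_, ?_, ⟨3, by omega, ?_, ?_⟩, ⟨4, by omega, ?_, ?_⟩, ?_⟩
      · rw [update_of_ne hne.symm, hx]; exact hyx.symm
      · intro u hu
        by_cases hua : u = a
        · rw [hua, update_self, ← hay]; exact hz2.1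
        · rw [update_of_ne hua]
          exact hy1 u (by simp [hua, hu])
      · intro u hu hu'
        simp [update_of_ne hu, update_of_ne hu']
      · rw [update_of_ne hne, update_self]; exact hz2.2
      · rw [update_of_ne hne, update_self, update_self, update_of_ne hne.symm]
        omega
      · rwa [update_self]
      · rw [update_self, update_of_ne hne.symm]; omega
      · intro _; rwa [update_self]
    · refine ⟨_, _, hR.move hy (by rw [hx]; exact hyx.symm) ?_,
        ?_, ⟨p, hp, ?_, ?_⟩, ⟨4, by omega, ?_, ?_⟩, ?_⟩
      · intro u hu
        by_cases hua : u = a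
        · rw [hua]; exact hay
        · exact hy1 u (by simp [hua, hu])
      · intro u _ hu
        simp [update_of_ne hu]
      · rwa [update_of_ne hne]
      · rw [update_self, update_of_ne hne]
        omega
      · rwa [update_self]
      · rw [update_self]; omega
      · intro _; rwa [update_self]

variable {G}

theorem PA.congr {k : ℕ} {a b : V} {φ n φ' n' : V → ℕ} {ms : List (V × ℕ)}
    (h : PA G k a b φ n ms) (h1 : φ' a = φ a) (h2 : n' a = n a) (h3 : n' b = n b) :
    PA G k a b φ' n' ms := by
  unfold PA at *
  rwa [h1, h2, h3]

theorem PB.congr {k : ℕ} {b : V} {φ n φ' n' : V → ℕ} {ms : List (V × ℕ)}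
    (h : PB G k b φ n ms) (h1 : φ' b = φ b) (h2 : n' b = n b) :
    PB G k b φ' n' ms := by
  unfold PB at *
  rwa [h1, h2]

theorem PA.tail {k : ℕ} {a b : V} {φ n : V → ℕ} {w : V} {x : ℕ} {ms : List (V × ℕ)}
    (h : PA G k a b φ n ((w, x) :: ms)) : PA G k a b φ n ms := by
  obtain ⟨q, h1, h2, h3⟩ := h
  by_cases hw : G.Adj a w
  · simp only [fut, hw, if_true, List.length_cons] at h2 h3
    rcases q with _ | q
    · exact ⟨0, by omega, by simp, by omega⟩
    · rw [List.take_succ_cons, List.mem_cons, not_or] at h2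
      exact ⟨q, by omega, h2.2, by omega⟩
  · simp only [fut, hw, if_false] at h2 h3
    exact ⟨q, h1, h2, h3⟩

theorem PB.tail {k : ℕ} {b : V} {φ n : V → ℕ} {w : V} {x : ℕ} {ms : List (V × ℕ)}
    (h : PB G k b φ n ((w, x) :: ms)) : PB G k b φ n ms := by
  obtain ⟨q, h1, h2, h3⟩ := h
  by_cases hw : G.Adj b w
  · simp only [fut, hw, if_true, List.length_cons] at h2 h3
    rcases q with _ | q
    · exact ⟨0, by omega, by simp, by omega⟩
    · rw [List.take_succ_cons, List.mem_cons, not_or] at h2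
      exact ⟨q, by omega, h2.2, by omega⟩
  · simp only [fut, hw, if_false] at h2 h3
    exact ⟨q, h1, h2, h3⟩

theorem loop {L : V → Finset ℕ} (hL : ∀ u, (L u).card = 10) {k : ℕ} {a b c d : V}
    (hnodup : ([a, b, c, d] : List V).Nodup)
    (he1 : G.Adj a b) (he3 : G.Adj c d)
    (hda : G.degree a = 5) (hdb : G.degree b = 6) (hdc : G.degree c = 6) (hdd : G.degree d = 5)
    (S : Set V) (hS : S = {a, b, c, d}) (α β : V → ℕ) (ms : List (V × ℕ)) :
    ∀ {φ n : V → ℕ}, Reach_s7 G L α φ n → OutOK G L S β ms φ →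
      PA G k a b φ n ms → PB G k b φ n ms → PB G k c φ n ms → PA G k d c φ n ms →
      (∀ u, u ∉ S → n u + (ms.map Prod.fst).count u ≤ k) →
    ∃ φ' n', Reach_s7 G L α φ' n' ∧ (∀ u, u ∉ S → φ' u = β u) ∧
      PA G k a b φ' n' [] ∧ PB G k b φ' n' [] ∧ PB G k c φ' n' [] ∧ PA G k d c φ' n' [] ∧
      (∀ u, u ∉ S → n' u ≤ k) := by
  simp only [List.nodup_cons, List.mem_cons, List.not_mem_nil, or_false, not_or, not_false_eq_true,
    List.nodup_nil, and_true] at hnodup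
  obtain ⟨⟨hab, hac, had⟩, ⟨hbc, hbd⟩, hcd⟩ := hnodup
  induction ms with
  | nil =>
    intro φ n hR hO hA hB hC hD hn
    exact ⟨φ, n, hR, hO, hA, hB, hC, hD, fun u hu => by simpa using hn u hu⟩
  | cons p ms ih =>
    obtain ⟨w, x⟩ := p
    intro φ n hR hO hA hB hC hD hn
    -- fix b
    obtain ⟨φ1, n1, hR1, s1, hA1, hB1, t1⟩ := fixB G hL he1 hda hdb hR hA hB
    have hC1 : PB G k c φ1 n1 _ := hC.congr (s1 c (Ne.symm hac) (Ne.symm hbc)).1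
      (s1 c (Ne.symm hac) (Ne.symm hbc)).2
    have hD1 : PA G k d c φ1 n1 _ := hD.congr (s1 d (Ne.symm had) (Ne.symm hbd)).1
      (s1 d (Ne.symm had) (Ne.symm hbd)).2 (s1 c (Ne.symm hac) (Ne.symm hbc)).2
    -- fix c
    obtain ⟨φ2, n2, hR2, s2, hD2, hC2, t2⟩ := fixB G hL he3.symm hdd hdc hR1 hD1 hC1
    have hA2 : PA G k a b φ2 n2 _ := hA1.congr (s2 a had hac).1 (s2 a had hac).2 (s2 b hbd hbc).2
    have hB2 : PB G k b φ2 n2 _ := hB1.congr (s2 b hbd hbc).1 (s2 b hbd hbc).2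
    -- fix a
    obtain ⟨φ3, n3, hR3, s3, hA3, t3⟩ := fixA G hL he1 hda hR2 hA2
    have e3b := s3 b (Ne.symm hab)
    have e3c := s3 c (Ne.symm hac)
    have e3d := s3 d (Ne.symm had)
    have hB3 : PB G k b φ3 n3 _ := hB2.congr e3b.1 e3b.2
    have hC3 : PB G k c φ3 n3 _ := hC2.congr e3c.1 e3c.2
    have hD3 : PA G k d c φ3 n3 _ := hD2.congr e3d.1 e3d.2 e3c.2
    -- fix d
    obtain ⟨φ4, n4, hR4, s4, hD4, t4⟩ := fixA G hL he3.symm hdd hR3 hD3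
    have e4a := s4 a had
    have e4b := s4 b hbd
    have e4c := s4 c hcd
    have hA4 : PA G k a b φ4 n4 _ := hA3.congr e4a.1 e4a.2 e4b.2
    have hB4 : PB G k b φ4 n4 _ := hB3.congr e4b.1 e4b.2
    have hC4 : PB G k c φ4 n4 _ := hC3.congr e4c.1 e4c.2
    have hout : ∀ u, u ∉ S → φ4 u = φ u ∧ n4 u = n u := by
      intro u hu
      simp only [hS, Set.mem_insert_iff, Set.mem_singleton_iff, not_or] at hu
      obtain ⟨ua, ub, uc, ud⟩ := hu
      rw [(s4 u ud).1, (s3 u ua).1, (s2 u ud uc).1, (s1 u ua ub).1,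
        (s4 u ud).2, (s3 u ua).2, (s2 u ud uc).2, (s1 u ua ub).2]
      exact ⟨rfl, rfl⟩
    obtain ⟨o1, o2, o3, o4, o5⟩ := hO.congr (fun u hu => (hout u hu).1)
    have hin : ∀ u ∈ S, G.Adj w u → φ4 u ≠ x := by
      intro u hu hwu
      simp only [hS, Set.mem_insert_iff, Set.mem_singleton_iff] at hu
      rcases hu with rfl | rfl | rfl | rfl
      · rw [e4a.1]; exact t3 hwu.symm
      · rw [e4b.1, e3b.1, (s2 u hbd hbc).1]; exact t1 hwu.symm
      · rw [e4c.1, e3c.1]; exact t2 hwu.symm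
      · exact t4 hwu.symm
    have hR5 := hR4.move o2 o3 (fun u hu => by
      by_cases h : u ∈ S
      · exact hin u h hu
      · exact o4 u h hu)
    have hw := o1
    simp only [hS, Set.mem_insert_iff, Set.mem_singleton_iff, not_or] at hw
    obtain ⟨wa, wb, wc, wd⟩ := hw
    refine ih hR5 o5 (hA4.tail.congr ?_ ?_ ?_) (hB4.tail.congr ?_ ?_) (hC4.tail.congr ?_ ?_)
      (hD4.tail.congr ?_ ?_ ?_) ?_
    iterate 10 (rw [update_of_ne (Ne.symm (by assumption))])
    intro u hu
    have := hn u hu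
    rw [List.map_cons, List.count_cons] at this
    by_cases huw : u = w
    · subst huw
      rw [update_self, (hout u hu).2]
      simp at this
      omega
    · rw [update_of_ne huw, (hout u hu).2]
      omega

end main

/-- configuration RC(b): if `G` contains this configuration and `G − S` has a
`k`-good recoloring sequence between the restrictions of `α` and `β` (`k ≥ 416`),
then `G` has a `k`-good recoloring sequence from `α` to `β`. -/
theorem stmt_7 {V : Type} [Fintype V] [DecidableEq V]
    (G : SimpleGraph V) [DecidableRel G.Adj]
    (k : ℕ) (hk : 416 ≤ k)
    (L : V → Finset ℕ) (hL : ∀ u, (L u).card = 10)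
    (α β : V → ℕ) (hα : IsLColoring G L α) (hβ : IsLColoring G L β)
    (a b c d : V) (hnodup : ([a, b, c, d] : List V).Nodup)
    (he1: G.Adj a b)
    (he2: G.Adj b c)
    (he3: G.Adj c d)
    (he4: G.Adj a c)
    (he5: G.Adj b d)
    (hda : G.degree a = 5)
    (hdb : G.degree b = 6)
    (hdc : G.degree c = 6)
    (hdd : G.degree d = 5)
    (S : Set V) (hS : S = {a, b, c, d})
    (hrec : ∃ (m : ℕ) (φ : Fin (m + 1) → ↥(Sᶜ) → ℕ),
      IsRecolSeq (G.induce Sᶜ) (fun u => L u.1) φ (fun u => α u.1) (fun u => β u.1) ∧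
      ∀ u : ↥(Sᶜ), recolorCount φ u ≤ k) :
    ∃ (M : ℕ) (ψ : Fin (M + 1) → V → ℕ),
      IsRecolSeq G L ψ α β ∧ ∀ u : V, recolorCount ψ u ≤ k := by
  classical
  obtain ⟨m, φ, hseq, hcount⟩ := hrec
  obtain ⟨ms, hO, hc⟩ := outOK_of_seq G L S β m φ α hseq
  have hcu : ∀ u, u ∉ S → (ms.map Prod.fst).count u ≤ k := by
    intro u hu
    have h1 := hc ⟨u, hu⟩
    have h2 := hcount ⟨u, hu⟩
    simp only at h1
    omega
  have hlen : ∀ (v : V) (T : Finset V), T ⊆ G.neighborFinset v → (∀ u ∈ T, u ∈ S) →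
      G.degree v ≤ T.card + 3 → 
      (fut G v ms).length ≤ 3 * k := by
    intro v T hT hTS hdeg
    let R := (G.neighborFinset v).filter (fun u => u ∉ S)
    have h1 := fut_length G v R ms (fun p hp ha => by
      simp only [R, Finset.mem_filter, SimpleGraph.mem_neighborFinset]
      exact ⟨ha, hO.notMem p hp⟩)
    have h2 : ∑ u ∈ R, (ms.map Prod.fst).count u ≤ R.card * k := by
      rw [← smul_eq_mul]
      exact Finset.sum_le_card_nsmul _ _ _ (fun u hu => hcu u (Finset.mem_filter.1 hu).2)
    have h3 : R.card ≤ 3 := by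
      have : R ⊆ G.neighborFinset v \ T := by
        intro u hu
        rw [Finset.mem_sdiff]
        exact ⟨(Finset.mem_filter.1 hu).1, fun h => (Finset.mem_filter.1 hu).2 (hTS u h)⟩
      have h4 := Finset.card_le_card this
      rw [Finset.card_sdiff_of_subset hT, G.card_neighborFinset_eq_degree] at h4
      omega
    exact h1.trans (h2.trans (Nat.mul_le_mul_right k h3))
  have hnd := hnodup
  simp only [List.nodup_cons, List.mem_cons, List.not_mem_nil, or_false, not_or, not_false_eq_true,
    List.nodup_nil, and_true] at hnd
  obtain ⟨⟨hab, hac, had⟩, ⟨hbc, hbd⟩, hcd⟩ := hnd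
  have la := hlen a {b, c} (by
    intro u hu
    simp only [Finset.mem_insert, Finset.mem_singleton] at hu
    rcases hu with rfl | rfl <;> simpa) (by simp [hS]) (by
    rw [Finset.card_pair hbc, hda])
  have ld := hlen d {b, c} (by
    intro u hu
    simp only [Finset.mem_insert, Finset.mem_singleton] at hu
    rcases hu with rfl | rfl
    · simpa using he5.symm
    · simpa using he3.symm) (by simp [hS]) (by
    rw [Finset.card_pair hbc, hdd])
  have lb := hlen b {a, c, d} (by
    intro u hu
    simp only [Finset.mem_insert, Finset.mem_singleton] at hu
    rcases hu with rfl | rfl | rfl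
    · simpa using he1.symm
    · simpa using he2
    · simpa using he5) (by simp [hS]) (by
    rw [Finset.card_eq_three.2 ⟨a, c, d, hac, had, hcd, rfl⟩, hdb])
  have lc := hlen c {a, b, d} (by
    intro u hu
    simp only [Finset.mem_insert, Finset.mem_singleton] at hu
    rcases hu with rfl | rfl | rfl
    · simpa using he4.symm
    · simpa using he2.symm
    · simpa using he3) (by simp [hS]) (by
    rw [Finset.card_eq_three.2 ⟨a, b, d, hab, had, hbd, rfl⟩, hdc])
  obtain ⟨φ', n', hR, hout, hA, hB, hC, hD, hn⟩ := loop (k := k) hL hnodup he1 he3 hda hdb hdc hdd S hS α β ms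
    (Reach_s7.refl hα) hO ⟨0, by omega, by simp, by simpa using la⟩ ⟨0, by omega, by simp, by simpa using lb⟩
    ⟨0, by omega, by simp, by simpa using lc⟩ ⟨0, by omega, by simp, by simpa using ld⟩
    (fun u hu => by simpa using hcu u hu)
  obtain ⟨N, hRN, hN1, hN2⟩ := finish G hL hβ {a, b, c, d} (by
    intro u hu
    simp only [Finset.mem_insert, Finset.mem_singleton] at hu
    rcases hu with rfl | rfl | rfl | rfl <;> omega) hR (by
    intro u hu
    apply hout
    simpa [hS] using hu)
  have hcard : ({a, b, c, d} : Finset V).card ≤ 4 := Finset.card_le_four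
  obtain ⟨M, ψ, hψ, hcψ⟩ := hRN.seq
  refine ⟨M, ψ, hψ, fun u => ?_⟩
  rw [hcψ]
  obtain ⟨qa, a1, -, a2⟩ := hA
  obtain ⟨qb, b1, -, b2⟩ := hB
  obtain ⟨qc, c1, -, c2⟩ := hC
  obtain ⟨qd, d1, -, d2⟩ := hD
  simp only [fut, List.length_nil] at a2 b2 c2 d2
  by_cases hu : u ∈ S
  · have := hN2 u
    simp only [hS, Set.mem_insert_iff, Set.mem_singleton_iff] at hu
    rcases hu with rfl | rfl | rfl | rfl <;> omega
  · rw [hN1 u (by simpa [hS] using hu)]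
    exact hn u hu
end
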